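/- Let K be any field and let G = ⟨(1,2,3,4,5,6,7,8)⟩ ⊆ S_8 be the cyclic group of order 8 generated by an 8-cycle. Then the fixed field K(x_1,…,x_8)^G is K-rational if and only if char(K) = 2, or char(K) ≠ 2 and the Galois group Gal(K(ζ_8)/K) is cyclic, where ζ_8 is a primitive 8th root of unity in an algebraic closure of K. -/

import Mathlib

noncomputable section

/-- The rational function field `K(x_i : i ∈ I)` over `K`, realized as the fraction field
of the multivariate polynomial ring. -/
abbrev RFF (K : Type) [Field K] (I : Type) := FractionRing (MvPolynomial I K)

/-- The image of the variable `x_i` in the rational function field `K(x_i : i ∈ I)`. -/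
noncomputable def Xvar (K : Type) [Field K] (I : Type) (i : I) : RFF K I :=
  algebraMap (MvPolynomial I K) (RFF K I) (MvPolynomial.X i)

/-- Permutations of the variables as `K`-algebra automorphisms of the polynomial ring. -/
def renameHom (K : Type) [Field K] (I : Type) :
    Equiv.Perm I →* (MvPolynomial I K ≃ₐ[K] MvPolynomial I K) where
  toFun σ := MvPolynomial.renameEquiv K σ
  map_one' := MvPolynomial.renameEquiv_refl K
  map_mul' σ τ := (MvPolynomial.renameEquiv_trans K τ σ).symm

/-- The action of permutations of the variables on `K(x_i : i ∈ I)` by `K`-automorphisms,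
determined by `σ(x_i) = x_{σ(i)}`. -/
noncomputable def permHom (K : Type) [Field K] (I : Type) :
    Equiv.Perm I →* (RFF K I ≃ₐ[K] RFF K I) :=
  (IsFractionRing.fieldEquivOfAlgEquivHom K (RFF K I)).comp (renameHom K I)

/-- The fixed field `K(x_i : i ∈ I)^G` of a group `G` of permutations of the variables. -/
noncomputable def fixedSub (K : Type) [Field K] (I : Type) (G : Subgroup (Equiv.Perm I)) :
    IntermediateField K (RFF K I) :=
  IntermediateField.fixedField (G.map (permHom K I))

/-- An extension `L/K` is `K`-rational if it is purely transcendental over `K`, i.e. generated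
by finitely many algebraically independent elements. -/
def IsRatExt (K : Type) [Field K] (L : Type*) [Field L] [Algebra K L] : Prop :=
  ∃ (n : ℕ) (t : Fin n → L), AlgebraicIndependent K t ∧
    IntermediateField.adjoin K (Set.range t) = ⊤


section UFD
open UniqueFactorizationMonoid

/-- Existence of an element of a factorial monoid with trivial units with prescribed multiplicities. -/
lemma exists_factorization_eq {A : Type} [CommMonoidWithZero A] [UniqueFactorizationMonoid A]
    [Nontrivial A] [DecidableEq A] [Subsingleton Aˣ] (B : A) (f : A → ℕ) 
    (hf : ∀ p, factorization B p = 0 → f p = 0) :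
    ∃ w : A, w ≠ 0 ∧ ∀ p, factorization w p = f p := by
  classical
  set m : Multiset A := ∑ p ∈ (normalizedFactors B).toFinset, f p • ({p} : Multiset A) with hm
  have hmem : ∀ p ∈ m, Irreducible p := by
    intro p hp
    rw [hm, Multiset.mem_sum] at hp
    obtain ⟨q, hq, hpq⟩ := hp
    have : p = q := by
      have := Multiset.mem_of_mem_nsmul hpq
      simpa using this
    subst this
    exact irreducible_of_normalized_factor p (Multiset.mem_toFinset.1 hq)
  refine ⟨m.prod, ?_, ?_⟩
  · intro h0
    rw [Multiset.prod_eq_zero_iff] at h0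
    exact (hmem 0 h0).ne_zero rfl
  · intro p
    have h1 : normalizedFactors m.prod = m := by
      rw [normalizedFactors_multiset_prod m (fun h => (hmem 0 h).ne_zero rfl)]
      have : m.map normalizedFactors = m.map (fun p => ({p} : Multiset A)) := by
        apply Multiset.map_congr rfl
        intro x hx
        rw [normalizedFactors_irreducible (hmem x hx)]
        simp [normalize_eq]
      rw [this, Multiset.sum_map_singleton]
    rw [factorization_eq_count, h1, hm, Multiset.count_sum']
    simp only [Multiset.count_nsmul, Multiset.count_singleton, smul_eq_mul, mul_ite, mul_one, mul_zero]
    rw [Finset.sum_ite_eq]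
    split_ifs with h
    · rfl
    · symm
      apply hf
      rw [factorization_eq_count, Multiset.count_eq_zero]
      exact fun h' => h (Multiset.mem_toFinset.2 h')

lemma factorization_equiv {A : Type} [CommMonoidWithZero A] [UniqueFactorizationMonoid A]
    [Nontrivial A] [DecidableEq A] [Subsingleton Aˣ] (e : A ≃* A) (x p : A) :
    factorization (e x) (e p) = factorization x p := by
  classical
  by_cases hx : x = 0
  · subst hx
    simp
  have : normalizedFactors (e x) = (normalizedFactors x).map e := by
    conv_lhs => rw [← associated_iff_eq.1 (prod_normalizedFactors hx)]
    rw [map_multiset_prod, normalizedFactors_multiset_prod]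
    · rw [Multiset.map_map]
      have : (normalizedFactors x).map (normalizedFactors ∘ e) = 
          ((normalizedFactors x).map e).map (fun p => ({p} : Multiset A)) := by
        rw [Multiset.map_map]
        apply Multiset.map_congr rfl
        intro y hy
        have : Irreducible (e y) := (MulEquiv.irreducible_iff e).2 (irreducible_of_normalized_factor y hy)
        simp [normalizedFactors_irreducible this, normalize_eq]
      rw [this, Multiset.sum_map_singleton]
    · intro h
      obtain ⟨y, hy, hy0⟩ := Multiset.mem_map.1 h
      have : y = 0 := by simpa using hy0
      exact (irreducible_of_normalized_factor y hy).ne_zero this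
  rw [factorization_eq_count, factorization_eq_count, this]
  exact Multiset.count_map_eq_count' _ _ e.injective _

lemma ufm_key {A : Type} [CommMonoidWithZero A] [UniqueFactorizationMonoid A]
    [Nontrivial A] [Subsingleton Aˣ] (e3 e7 : A ≃* A) (B X Y X' Y' : A) (hB : B ≠ 0)
    (hX : X ≠ 0) (hY : Y ≠ 0) (hX' : X' ≠ 0) (hY' : Y' ≠ 0)
    (h3 : e3 B * X ^ 8 = B ^ 3 * Y ^ 8) (h7 : e7 B * X' ^ 8 = B ^ 7 * Y' ^ 8) :
    ∃ w q : A, w ≠ 0 ∧ q ≠ 0 ∧ B = w * e3 w * q ^ 2 ∧ e7 w = w := by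
  classical
  have key3 : ∀ p, factorization (e3 B) p + 8 * factorization X p =
      3 * factorization B p + 8 * factorization Y p := by
    intro p
    have := congrArg (fun z => factorization z p) h3
    simpa [factorization_mul, factorization_pow, hB, hX, hY] using this
  have key7 : ∀ p, factorization (e7 B) p + 8 * factorization X' p =
      7 * factorization B p + 8 * factorization Y' p := by
    intro p
    have := congrArg (fun z => factorization z p) h7
    simpa [factorization_mul, factorization_pow, hB, hX', hY'] using this
  obtain ⟨w, hw0, hw⟩ := exists_factorization_eq B
    (fun p => if factorization B p % 8 = 1 ∨ factorization B p % 8 = 7 then 1 else 0)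
    (by intro p hp; simp [hp])
  obtain ⟨q, hq0, hq⟩ := exists_factorization_eq B (fun p => factorization B p / 2)
    (by intro p hp; simp [hp])
  have e3w : ∀ p, factorization (e3 w) p = 
      if factorization B p % 8 = 3 ∨ factorization B p % 8 = 5 then 1 else 0 := by
    intro p
    obtain ⟨r, rfl⟩ := e3.surjective p
    have := key3 (e3 r)
    rw [factorization_equiv] at this ⊢
    rw [hw]
    split_ifs <;> omega
  have e7w : ∀ p, factorization (e7 w) p = factorization w p := by
    intro p
    rw [hw]
    obtain ⟨r, rfl⟩ := e7.surjective p
    have := key7 (e7 r)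
    rw [factorization_equiv] at this ⊢
    rw [hw]
    split_ifs <;> omega
  have e3w0 : e3 w ≠ 0 := by simpa using hw0
  have e7w0 : e7 w ≠ 0 := by simpa using hw0
  refine ⟨w, q, hw0, hq0, ?_, ?_⟩
  · apply associated_iff_eq.1
    apply associated_of_factorization_eq _ _ hB (by simp [hw0, hq0])
    ext p
    rw [factorization_mul (by simp [hw0]) (by simp [hq0]), factorization_mul hw0 e3w0,
      factorization_pow]
    simp only [Finsupp.add_apply, Finsupp.smul_apply, smul_eq_mul, hw, hq, e3w]
    split_ifs <;> omega
  · apply associated_iff_eq.1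
    apply associated_of_factorization_eq _ _ e7w0 hw0
    ext p
    exact e7w p

/-- The automorphism of the monoid of associate classes induced by a ring automorphism. -/
def assocEquiv {R : Type} [CommRing R] (e : R ≃+* R) : Associates R ≃* Associates R where
  toFun := Quotient.map e (fun _ _ h => h.map e)
  invFun := Quotient.map e.symm (fun _ _ h => h.map e.symm)
  left_inv a := by
    refine Quotient.inductionOn a ?_
    intro a
    simp [Quotient.map_mk]
  right_inv a := by
    refine Quotient.inductionOn a ?_
    intro a
    simp [Quotient.map_mk]
  map_mul' a b := by
    refine Quotient.inductionOn₂ a b ?_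
    intro a b
    change Quotient.map e _ (Associates.mk a * Associates.mk b) = Associates.mk (e a) * Associates.mk (e b)
    rw [Associates.mk_mul_mk, Associates.mk_mul_mk, ← map_mul]
    rfl

lemma assocEquiv_mk {R : Type} [CommRing R] (e : R ≃+* R) (a : R) :
    assocEquiv e (Associates.mk a) = Associates.mk (e a) := rfl

lemma ufd_key {R : Type} [CommRing R] [IsDomain R] [UniqueFactorizationMonoid R] (e3 e7 : R ≃+* R)
    (B X Y X' Y' : R) (hB : B ≠ 0)
    (hX : X ≠ 0) (hY : Y ≠ 0) (hX' : X' ≠ 0) (hY' : Y' ≠ 0)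
    (h3 : e3 B * X ^ 8 = B ^ 3 * Y ^ 8) (h7 : e7 B * X' ^ 8 = B ^ 7 * Y' ^ 8) :
    ∃ w q : R, w ≠ 0 ∧ q ≠ 0 ∧ Associated (w * e3 w * q ^ 2) B ∧ Associated w (e7 w) := by
  obtain ⟨w, q, hw, hq, h1, h2⟩ := ufm_key (assocEquiv e3) (assocEquiv e7) (Associates.mk B)
    (Associates.mk X) (Associates.mk Y) (Associates.mk X') (Associates.mk Y')
    (by simpa using hB) (by simpa using hX) (by simpa using hY) (by simpa using hX')
    (by simpa using hY')
    (by rw [assocEquiv_mk, ← Associates.mk_pow, ← Associates.mk_pow, ← Associates.mk_pow,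
          Associates.mk_mul_mk, Associates.mk_mul_mk, h3])
    (by rw [assocEquiv_mk, ← Associates.mk_pow, ← Associates.mk_pow, ← Associates.mk_pow,
          Associates.mk_mul_mk, Associates.mk_mul_mk, h7])
  obtain ⟨w, rfl⟩ := Associates.mk_surjective w
  obtain ⟨q, rfl⟩ := Associates.mk_surjective q
  refine ⟨w, q, by simpa using hw, by simpa using hq, ?_, ?_⟩
  · rw [assocEquiv_mk, ← Associates.mk_pow, Associates.mk_mul_mk, Associates.mk_mul_mk] at h1
    exact (Associates.mk_eq_mk_iff_associated.1 h1).symm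
  · rw [assocEquiv_mk] at h2
    exact (Associates.mk_eq_mk_iff_associated.1 h2).symm
end UFD

section Miyata
open Polynomial

/-- twisted substitution on polynomials -/
def twist {A : Type} [Field A] (s : A →+* A) (α β : A) : A[X] →+* A[X] :=
  eval₂RingHom (C.comp s) (C α * X + C β)

lemma twist_natDegree {A : Type} [Field A] (s : A →+* A) (α β : A) (hα : α ≠ 0) (q : A[X]) :
    (twist s α β q).natDegree = q.natDegree := by
  have : twist s α β q = (q.map s).comp (C α * X + C β) := by
    simp [twist, eval₂RingHom, comp, eval₂_map]
  rw [this, natDegree_comp, natDegree_map, natDegree_linear hα, mul_one]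

lemma twist_degree {A : Type} [Field A] (s : A →+* A) (α β : A) (hα : α ≠ 0) (q : A[X]) :
    (twist s α β q).degree = q.degree := by
  have : twist s α β q = (q.map s).comp (C α * X + C β) := by
    simp [twist, eval₂RingHom, comp, eval₂_map]
  by_cases hq : q = 0
  · simp [hq]
  have h0 : twist s α β q ≠ 0 := by
    rw [this]
    intro h
    rw [comp_eq_zero_iff] at h
    rcases h with h | ⟨_, h⟩
    · exact hq ((Polynomial.map_eq_zero s).1 h)
    · have := congrArg natDegree h
      rw [natDegree_linear hα] at this
      simp at this
  rw [degree_eq_natDegree h0, degree_eq_natDegree hq, twist_natDegree s α β hα]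

/-- Polynomials invariant under a twisted substitution are polynomials in one of them, with
invariant coefficients. -/
lemma twist_inv {A : Type} [Field A] (s : A →+* A) (α β : A) (hα : α ≠ 0) :
    ∃ p : A[X], twist s α β p = p ∧ ∀ q : A[X], twist s α β q = q →
      ∃ r : A[X], (∀ i, s (r.coeff i) = r.coeff i) ∧ q = r.comp p := by
  classical
  have hconst : ∀ q : A[X], q.natDegree = 0 → twist s α β q = q → s (q.coeff 0) = q.coeff 0 := by
    intro q hq h
    rw [natDegree_eq_zero] at hq
    obtain ⟨c, rfl⟩ := hq
    simp only [twist, coe_eval₂RingHom, eval₂_C, RingHom.comp_apply, C_inj] at h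
    simpa using h
  by_cases hex : ∃ n, ∃ p : A[X], twist s α β p = p ∧ 0 < p.natDegree ∧ p.natDegree = n
  · obtain ⟨p, hp, hp0, hpn⟩ := Nat.find_spec hex
    have hmin : ∀ q : A[X], twist s α β q = q → q.natDegree < p.natDegree → q.natDegree = 0 := by
      intro q hq hlt
      by_contra h0
      rw [hpn] at hlt
      exact Nat.find_min hex hlt ⟨q, hq, Nat.pos_of_ne_zero h0, rfl⟩
    have hpne : p ≠ 0 := by rintro rfl; simp at hp0
    refine ⟨p, hp, ?_⟩
    intro q
    induction' hn : q.natDegree using Nat.strong_induction_on with n ih generalizing q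
    intro hq
    have hdm := EuclideanDomain.div_add_mod q p
    have hlt : (q % p).degree < p.degree := EuclideanDomain.mod_lt q hpne
    have h1 : p * (q / p - twist s α β (q / p)) = twist s α β (q % p) - q % p := by
      have := congrArg (twist s α β) hdm
      rw [map_add, map_mul, hp, hq] at this
      rw [mul_sub]
      linear_combination hdm - this
    have h2 : q / p - twist s α β (q / p) = 0 := by
      by_contra hne
      have hd : (twist s α β (q % p) - q % p).degree < p.degree := by
        refine lt_of_le_of_lt (degree_sub_le _ _) ?_
        rw [twist_degree s α β hα]
        simpa using hlt
      rw [← h1, degree_mul] at hd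
      have : (0 : WithBot ℕ) ≤ (q / p - twist s α β (q / p)).degree := zero_le_degree_iff.2 hne
      exact absurd hd (not_lt.2 (le_add_of_nonneg_right this))
    have h3 : twist s α β (q / p) = q / p := (sub_eq_zero.1 h2).symm
    have h4 : twist s α β (q % p) = q % p := by
      rw [h2, mul_zero] at h1
      exact sub_eq_zero.1 h1.symm
    have h5 : (q % p).natDegree = 0 := by
      apply hmin _ h4
      by_cases hz : q % p = 0
      · rw [hz]
        simpa using hp0
      · exact natDegree_lt_natDegree hz hlt
    by_cases hq0 : q.natDegree = 0
    · refine ⟨q, ?_, ?_⟩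
      · intro i
        rcases Nat.eq_zero_or_pos i with rfl | hi
        · exact hconst q hq0 hq
        · rw [coeff_eq_zero_of_natDegree_lt (by omega), map_zero]
      · rw [natDegree_eq_zero] at hq0
        obtain ⟨c, rfl⟩ := hq0
        simp
    · have h6 : (q / p).natDegree < n := by
        have hqne : q ≠ 0 := by rintro rfl; simp at hq0
        have := degree_div_lt hqne (natDegree_pos_iff_degree_pos.1 hp0)
        by_cases hz : q / p = 0
        · rw [hz, natDegree_zero]
          omega
        · rw [← hn]
          exact natDegree_lt_natDegree hz this
      obtain ⟨r, hr, hr'⟩ := ih _ h6 (q / p) rfl h3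
      refine ⟨X * r + C ((q % p).coeff 0), ?_, ?_⟩
      · intro i
        have := hconst _ h5 h4
        rcases i with _ | i
        · simpa using this
        · simpa [coeff_X_mul, coeff_C] using hr i
      · conv_lhs => rw [← hdm]
        simp only [add_comp, mul_comp, X_comp, C_comp]
        rw [← hr', ← eq_C_of_natDegree_eq_zero h5]
  · push Not at hex
    refine ⟨0, by simp, ?_⟩
    intro q hq
    have h0 : q.natDegree = 0 := by
      by_contra h0
      exact hex _ q hq (Nat.pos_of_ne_zero h0) rfl
    refine ⟨q, ?_, ?_⟩
    · intro i
      rcases Nat.eq_zero_or_pos i with rfl | hi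
      · exact hconst q h0 hq
      · rw [coeff_eq_zero_of_natDegree_lt (by omega), map_zero]
    · rw [natDegree_eq_zero] at h0
      obtain ⟨c, rfl⟩ := h0
      simp


lemma miyata_step {K E : Type} [Field K] [Field E] [Algebra K E] (σ : E ≃ₐ[K] E) (m : ℕ)
    (hσ : ∀ x, σ^[m + 1] x = x) (A : IntermediateField K E) (hA : ∀ a ∈ A, σ a ∈ A)
    (y : E) (hy : Transcendental A y) (α β : A) (hα : α ≠ 0) (hy' : σ y = α * y + β) :
    ∃ p : E, σ p = p ∧ ∀ f ∈ IntermediateField.adjoin A {y}, σ f = f →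
      f ∈ IntermediateField.adjoin K ({a | a ∈ A ∧ σ a = a} ∪ {p}) := by
  let s : A →+* A :=
    { toFun := fun a => ⟨σ a, hA a a.2⟩
      map_one' := by ext; simp
      map_mul' := by intro a b; ext; simp
      map_zero' := by ext; simp
      map_add' := by intro a b; ext; simp }
  have hs : ∀ a : A, ((s a : A) : E) = σ a := fun a => rfl
  have htw : ∀ q : A[X], σ (aeval y q) = aeval y (twist s α β q) := by
    intro q
    induction q using Polynomial.induction_on' with
    | add p q hp hq => simp [hp, hq]
    | monomial n a =>
      rw [← C_mul_X_pow_eq_monomial]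
      simp only [map_mul, map_pow, aeval_C, aeval_X, twist, coe_eval₂RingHom, eval₂_C, eval₂_X,
        RingHom.comp_apply, hy', map_add, IntermediateField.algebraMap_apply, hs]
  have hinj : Function.Injective (aeval (R := A) y) := transcendental_iff_injective.1 hy
  obtain ⟨p, hp, hall⟩ := twist_inv s α β hα
  set T := IntermediateField.adjoin K ({a | a ∈ A ∧ σ a = a} ∪ {aeval y p}) with hT
  have hpoly : ∀ q : A[X], σ (aeval y q) = aeval y q → aeval y q ∈ T := by
    intro q hq
    rw [htw] at hq
    obtain ⟨r, hr, rfl⟩ := hall q (hinj hq)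
    rw [aeval_comp, aeval_eq_sum_range]
    apply sum_mem
    intro i _
    rw [Algebra.smul_def]
    apply mul_mem
    · apply IntermediateField.subset_adjoin
      left
      exact ⟨(r.coeff i).2, by
        have := congrArg (Subtype.val) (hr i)
        simpa [hs] using this⟩
    · apply pow_mem
      apply IntermediateField.subset_adjoin
      right
      rfl
  refine ⟨aeval y p, by rw [htw, hp], ?_⟩
  intro f hf hσf
  obtain ⟨n, d, rfl⟩ := (IntermediateField.mem_adjoin_simple_iff _ _).1 hf
  by_cases hd : aeval y d = 0
  · rw [hd, div_zero]; exact zero_mem _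
  have hit : ∀ i, ∃ q : A[X], σ^[i] (aeval y d) = aeval y q := by
    intro i
    induction i with
    | zero => exact ⟨d, rfl⟩
    | succ i ih =>
      obtain ⟨q, hq⟩ := ih
      exact ⟨twist s α β q, by rw [Function.iterate_succ_apply', hq, htw]⟩
  choose q hq using hit
  set D : E := ∏ i ∈ Finset.range (m + 1), σ^[i] (aeval y d) with hD
  have hD' : D = aeval y (∏ i ∈ Finset.range (m + 1), q i) := by
    rw [hD, map_prod]
    exact Finset.prod_congr rfl (fun i _ => hq i)
  have hne : ∀ i, σ^[i] (aeval y d) ≠ 0 := by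
    intro i
    induction i with
    | zero => exact hd
    | succ i ih =>
      rw [Function.iterate_succ_apply']
      simpa using ih
  have hD0 : D ≠ 0 := by
    rw [hD, Finset.prod_ne_zero_iff]
    exact fun i _ => hne i
  have hσD : σ D = D := by
    have h1 : σ D = ∏ i ∈ Finset.range (m + 1), σ^[i+1] (aeval y d) := by
      rw [hD, map_prod]
      exact Finset.prod_congr rfl (fun i _ => (Function.iterate_succ_apply' _ _ _).symm)
    have h2 := Finset.prod_range_succ' (fun i => σ^[i] (aeval y d)) (m + 1)
    have h3 := Finset.prod_range_succ (fun i => σ^[i] (aeval y d)) (m + 1)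
    rw [h2, ← h1, ← hD, hσ] at h3
    exact mul_right_cancel₀ (hne 0) h3
  have hfD : aeval y n / aeval y d * D = aeval y (n * ∏ i ∈ Finset.range m, q (i+1)) := by
    rw [hD, Finset.prod_range_succ', map_mul, map_prod]
    simp only [hq (_ + 1), Function.iterate_zero, id]
    field_simp
  have h1 : aeval y n / aeval y d * D ∈ T := by
    rw [hfD]
    apply hpoly
    rw [← hfD, map_mul, hσf, hσD]
  have h2 : D ∈ T := by
    rw [hD']
    apply hpoly
    rw [← hD', hσD]
  have := div_mem h1 h2
  rwa [mul_div_cancel_right₀ _ hD0] at this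

/-- Miyata's theorem for a triangular action. -/
lemma miyata_chain {K E : Type} [Field K] [Field E] [Algebra K E] (σ : E ≃ₐ[K] E) (m : ℕ)
    (hσ : ∀ x, σ^[m + 1] x = x) (n : ℕ) (z : Fin n → E) (hz : AlgebraicIndependent K z)
    (hσz : ∀ i, ∃ α : K, ∃ β ∈ IntermediateField.adjoin K (z '' {j | j < i}),
      α ≠ 0 ∧ σ (z i) = algebraMap K E α * z i + β) :
    ∀ k ≤ n, ∃ p : Fin k → E, (∀ i, σ (p i) = p i) ∧
      ∀ f ∈ IntermediateField.adjoin K (z '' {j | j.1 < k}), σ f = f →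
        f ∈ IntermediateField.adjoin K (Set.range p) := by
  intro k
  induction k with
  | zero =>
    intro _
    refine ⟨Fin.elim0, fun i => i.elim0, ?_⟩
    intro f hf _
    have : {j : Fin n | j.1 < 0} = ∅ := by ext; simp
    rw [this, Set.image_empty] at hf
    exact IntermediateField.adjoin.mono _ _ _ (Set.empty_subset _) hf
  | succ k ih =>
    intro hk
    obtain ⟨p, hp, hp'⟩ := ih (by omega)
    set A := IntermediateField.adjoin K (z '' {j | j.1 < k}) with hAdef
    have hA : ∀ a ∈ A, σ a ∈ A := by
      have : A ≤ A.comap (σ : E →ₐ[K] E) := by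
        conv_lhs => rw [hAdef]
        rw [IntermediateField.adjoin_le_iff]
        rintro _ ⟨j, hj, rfl⟩
        obtain ⟨α, β, hβ, hα, h⟩ := hσz j
        change σ (z j) ∈ A
        rw [h]
        refine add_mem (mul_mem (A.algebraMap_mem α)
          (IntermediateField.subset_adjoin _ _ ⟨j, hj, rfl⟩)) ?_
        refine IntermediateField.adjoin.mono _ _ _ (Set.image_mono ?_) hβ
        intro i hi
        have : i.1 < j.1 := hi
        have : j.1 < k := hj
        simp only [Set.mem_ofPred_eq]; omega
      exact fun a ha => this ha
    let i : Fin n := ⟨k, by omega⟩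
    obtain ⟨α, β, hβ, hα, h⟩ := hσz i
    have hset : {j : Fin n | j < i} = {j | j.1 < k} := rfl
    rw [hset] at hβ
    have htr : Transcendental A (z i) := by
      have h1 : Transcendental (Algebra.adjoin K (z '' {j | j.1 < k})) (z i) :=
        hz.transcendental_adjoin (by simp [i])
      intro halg
      apply h1
      open scoped IntermediateField.algebraAdjoinAdjoin in
      exact (IsFractionRing.isAlgebraic_iff (Algebra.adjoin K (z '' {j | j.1 < k})) A E).2 halg
    obtain ⟨p1, hp1, hp1'⟩ := miyata_step σ m hσ A hA (z i) htr (algebraMap K A α) ⟨β, hβ⟩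
      (by simpa using hα) (by rw [h]; rfl)
    refine ⟨Fin.snoc p p1, ?_, ?_⟩
    · intro j
      refine Fin.lastCases ?_ ?_ j
      · simpa using hp1
      · intro j; simpa using hp j
    · intro f hf hσf
      have h2 : f ∈ IntermediateField.adjoin A {z i} := by
        have : IntermediateField.adjoin K (z '' {j | j.1 < k + 1}) ≤
            (IntermediateField.adjoin A {z i}).restrictScalars K := by
          rw [IntermediateField.adjoin_le_iff]
          rintro _ ⟨j, hj, rfl⟩
          rcases Nat.lt_succ_iff_lt_or_eq.1 hj with hj | hj
          · exact (IntermediateField.adjoin A {z i}).algebraMap_mem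
              ⟨z j, IntermediateField.subset_adjoin _ _ ⟨j, hj, rfl⟩⟩
          · have : j = i := Fin.ext hj
            rw [this]
            exact IntermediateField.mem_adjoin_simple_self A (z i)
        exact this hf
      have h3 := hp1' f h2 hσf
      refine (IntermediateField.adjoin_le_iff.2 ?_) h3
      rintro x (⟨hx, hx'⟩ | hx)
      · refine IntermediateField.adjoin.mono _ _ _ ?_ (hp' x hx hx')
        rintro _ ⟨j, rfl⟩
        exact ⟨j.castSucc, by simp⟩
      · rw [Set.mem_singleton_iff] at hx
        subst hx
        exact IntermediateField.subset_adjoin _ _ ⟨Fin.last k, by simp⟩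
end Miyata

section Basics

/-- The generator of the action. -/
abbrev sg (K : Type) [Field K] : RFF K (Fin 8) ≃ₐ[K] RFF K (Fin 8) :=
  permHom K (Fin 8) (finRotate 8)

lemma permHom_algebraMap (K : Type) [Field K] (I : Type) (s : Equiv.Perm I) (q : MvPolynomial I K) :
    permHom K I s (algebraMap _ _ q) = algebraMap _ _ (MvPolynomial.rename s q) := by
  simp [permHom, renameHom, IsFractionRing.fieldEquivOfAlgEquivHom_apply]

lemma permHom_Xvar (K : Type) [Field K] (I : Type) (s : Equiv.Perm I) (i : I) :
    permHom K I s (Xvar K I i) = Xvar K I (s i) := by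
  simp [Xvar, permHom_algebraMap]

lemma sg_iter (K : Type) [Field K] (x : RFF K (Fin 8)) : (sg K)^[7 + 1] x = x := by
  have h : (sg K) ^ 8 = 1 := by
    rw [← map_pow]
    have : (finRotate 8) ^ 8 = 1 := by decide
    rw [this, map_one]
  have h2 := congrArg (fun e => e x) h
  simpa [AlgEquiv.coe_pow] using h2

lemma mem_fixedSub_iff (K : Type) [Field K] (f : RFF K (Fin 8)) :
    f ∈ fixedSub K (Fin 8) (Subgroup.zpowers (finRotate 8)) ↔ sg K f = f := by
  rw [fixedSub, IntermediateField.mem_fixedField_iff]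
  constructor
  · intro h
    exact h _ ⟨finRotate 8, Subgroup.mem_zpowers _, rfl⟩
  · rintro h _ ⟨g, hg, rfl⟩
    have : Subgroup.zpowers (finRotate 8) ≤ 
       (MulAction.stabilizer (RFF K (Fin 8) ≃ₐ[K] RFF K (Fin 8)) f).comap (permHom K (Fin 8)) := by
      rw [Subgroup.zpowers_le]
      exact h
    exact this hg

lemma trdeg_RFF (K : Type) [Field K] : (8 : Cardinal) ≤ Algebra.trdeg K (RFF K (Fin 8)) := by
  have h1 : AlgebraicIndependent K (fun i : Fin 8 => algebraMap (MvPolynomial (Fin 8) K) (RFF K (Fin 8)) (MvPolynomial.X i)) :=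
    (MvPolynomial.algebraicIndependent_X (Fin 8) K).map' (f := IsScalarTower.toAlgHom K (MvPolynomial (Fin 8) K) (RFF K (Fin 8)))
      (IsFractionRing.injective _ _)
  have h2 := h1.cardinalMk_le_trdeg
  simpa using h2

lemma algInd_of_algebraic (K : Type) [Field K] (z : Fin 8 → RFF K (Fin 8))
    (h : Algebra.IsAlgebraic (IntermediateField.adjoin K (Set.range z)) (RFF K (Fin 8))) :
    AlgebraicIndependent K z := by
  have : Algebra.IsAlgebraic (Algebra.adjoin K (Set.range z)) (RFF K (Fin 8)) := by
    open scoped IntermediateField.algebraAdjoinAdjoin in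
    exact (IsFractionRing.comap_isAlgebraic_iff (A := Algebra.adjoin K (Set.range z)) 
      (K := IntermediateField.adjoin K (Set.range z))).2 h
  exact (Algebra.IsAlgebraic.isTranscendenceBasis_of_le_trdeg_of_finite K z 
    (by simpa using trdeg_RFF K)).1

lemma algInd_of_gen (K : Type) [Field K] (z : Fin 8 → RFF K (Fin 8))
    (h : IntermediateField.adjoin K (Set.range z) = ⊤) :
    AlgebraicIndependent K z := by
  apply algInd_of_algebraic
  rw [h]
  constructor
  intro x
  exact isAlgebraic_algebraMap (⟨x, trivial⟩ : (⊤ : IntermediateField K (RFF K (Fin 8))))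

lemma algebraic_over_fixed (K : Type) [Field K] :
    Algebra.IsAlgebraic (fixedSub K (Fin 8) (Subgroup.zpowers (finRotate 8))) (RFF K (Fin 8)) := by
  rw [fixedSub]
  have hfin : Finite ((Subgroup.zpowers (finRotate 8)).map (permHom K (Fin 8))) := by
    have h1 : (Subgroup.zpowers (finRotate 8) : Set (Equiv.Perm (Fin 8))).Finite := Set.toFinite _
    have h2 := h1.image (permHom K (Fin 8))
    exact h2.to_subtype
  generalize (Subgroup.zpowers (finRotate 8)).map (permHom K (Fin 8)) = H at hfin
  constructor
  intro x
  exact (FixedPoints.isIntegral H (RFF K (Fin 8)) x).isAlgebraic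

lemma ratext_of_gens (K : Type) [Field K] (p : Fin 8 → RFF K (Fin 8))
    (hp : ∀ i, sg K (p i) = p i)
    (hall : ∀ f, sg K f = f → f ∈ IntermediateField.adjoin K (Set.range p)) :
    IsRatExt K ↥(fixedSub K (Fin 8) (Subgroup.zpowers (finRotate 8))) := by
  have heq : IntermediateField.adjoin K (Set.range p) = 
      fixedSub K (Fin 8) (Subgroup.zpowers (finRotate 8)) := by
    apply le_antisymm
    · rw [IntermediateField.adjoin_le_iff]
      rintro _ ⟨i, rfl⟩
      exact (mem_fixedSub_iff K _).2 (hp i)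
    · intro f hf
      exact hall f ((mem_fixedSub_iff K _).1 hf)
  have hind : AlgebraicIndependent K p := by
    apply algInd_of_algebraic
    rw [heq]
    exact algebraic_over_fixed K
  set F := fixedSub K (Fin 8) (Subgroup.zpowers (finRotate 8)) with hF
  refine ⟨8, fun i => ⟨p i, (mem_fixedSub_iff K _).2 (hp i)⟩, ?_, ?_⟩
  · exact AlgebraicIndependent.of_comp F.val hind
  · rw [eq_top_iff]
    rintro ⟨f, hf⟩ -
    have h1 : f ∈ IntermediateField.adjoin K (Set.range p) := by rw [heq]; exact hf
    have h2 : (IntermediateField.adjoin K (Set.range fun i => (⟨p i, (mem_fixedSub_iff K _).2 (hp i)⟩ : F))).map F.val =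
        IntermediateField.adjoin K (Set.range p) := by
      rw [IntermediateField.adjoin_map, ← Set.range_comp]
      rfl
    rw [← h2] at h1
    obtain ⟨g, hg, hgf⟩ := h1
    have : g = ⟨f, hf⟩ := Subtype.ext hgf
    exact this ▸ hg

lemma adjoin_top_of_stable (K : Type) [Field K] (T : IntermediateField K (RFF K (Fin 8)))
    (h0 : Xvar K (Fin 8) 0 ∈ T) (hs : ∀ f ∈ T, sg K f ∈ T) : T = ⊤ := by
  have hx : ∀ i : Fin 8, Xvar K (Fin 8) i ∈ T := by
    intro i
    induction i using Fin.induction with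
    | zero => exact h0
    | succ i ih =>
      have := hs _ ih
      rw [permHom_Xvar] at this
      simpa using this
  rw [eq_top_iff]
  intro f _
  obtain ⟨a, b, -, rfl⟩ := IsFractionRing.div_surjective (MvPolynomial (Fin 8) K) f
  have hpoly : ∀ q : MvPolynomial (Fin 8) K, algebraMap _ (RFF K (Fin 8)) q ∈ T := by
    intro q
    induction q using MvPolynomial.induction_on with
    | C a => exact T.algebraMap_mem a
    | add p q hp hq => rw [map_add]; exact add_mem hp hq
    | mul_X p i hp => rw [map_mul]; exact mul_mem hp (hx i)
  exact div_mem (hpoly a) (hpoly b)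

end Basics

section Char2

lemma rational_char_two (K : Type) [Field K] [CharP K 2] :
    IsRatExt K ↥(fixedSub K (Fin 8) (Subgroup.zpowers (finRotate 8))) := by
  have : CharP (RFF K (Fin 8)) 2 := charP_of_injective_algebraMap (algebraMap K _).injective 2
  let d : RFF K (Fin 8) → RFF K (Fin 8) := fun x => sg K x + x
  let w : ℕ → RFF K (Fin 8) := fun n => d^[n] (Xvar K (Fin 8) 0)
  have hw : ∀ n, sg K (w n) = w n + w (n + 1) := by
    intro n
    have : w (n + 1) = sg K (w n) + w n := Function.iterate_succ_apply' _ _ _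
    rw [this]
    linear_combination -(CharTwo.add_self_eq_zero (w n))
  have hw8 : w 8 = 0 := by
    have hexp : ∀ n, w (n + 2) = sg K (sg K (w n)) + w n := by
      intro n
      rw [hw n, map_add, hw, hw (n + 1)]
      linear_combination -(CharTwo.add_self_eq_zero (w n)) - CharTwo.add_self_eq_zero (w (n+1))
    have h4 : ∀ n, w (n + 4) = (sg K)^[4] (w n) + w n := by
      intro n
      rw [hexp (n + 2), hexp n]
      simp only [map_add, Function.iterate_succ, Function.comp, Function.iterate_zero, id]
      linear_combination (CharTwo.add_self_eq_zero (sg K (sg K (w n))))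
    have h8 : ∀ n, w (n + 8) = (sg K)^[8] (w n) + w n := by
      intro n
      rw [h4 (n + 4), h4 n]
      simp only [map_add, Function.iterate_succ, Function.comp, Function.iterate_zero, id]
      linear_combination (CharTwo.add_self_eq_zero (sg K (sg K (sg K (sg K (w n))))))
    rw [h8 0, sg_iter K, CharTwo.add_self_eq_zero]
  let z : Fin 8 → RFF K (Fin 8) := fun i => w (7 - i.1)
  have hz : ∀ i, sg K (z i) = z i + w (8 - i.1) := by
    intro i
    have : 8 - i.1 = 7 - i.1 + 1 := by omega
    rw [this]
    exact hw _
  have hzmem : ∀ (S : Set (Fin 8)) (i : Fin 8), (∀ j < i, j ∈ S) → 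
      w (8 - i.1) ∈ IntermediateField.adjoin K (z '' S) := by
    intro S i hS
    by_cases hi : i.1 = 0
    · rw [hi, Nat.sub_zero, hw8]
      exact zero_mem _
    · apply IntermediateField.subset_adjoin
      refine ⟨⟨i.1 - 1, by omega⟩, hS _ ?_, ?_⟩
      · rw [Fin.lt_def]
        simp only
        omega
      · simp only [z]
        congr 1
        omega
  have hgen : IntermediateField.adjoin K (Set.range z) = ⊤ := by
    apply adjoin_top_of_stable
    · exact IntermediateField.subset_adjoin _ _ ⟨7, rfl⟩
    · intro f hf
      have : IntermediateField.adjoin K (Set.range z) ≤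
          (IntermediateField.adjoin K (Set.range z)).comap (sg K : RFF K (Fin 8) →ₐ[K] _) := by
        rw [IntermediateField.adjoin_le_iff]
        rintro _ ⟨i, rfl⟩
        change sg K (z i) ∈ IntermediateField.adjoin K (Set.range z)
        rw [hz]
        refine add_mem (IntermediateField.subset_adjoin _ _ ⟨i, rfl⟩) ?_
        have := hzmem Set.univ i (by simp)
        rwa [Set.image_univ] at this
      exact this hf
  obtain ⟨p, hp, hp'⟩ := miyata_chain (sg K) 7 (sg_iter K) 8 z (algInd_of_gen K z hgen)
    (by
      intro i
      refine ⟨1, w (8 - i.1), hzmem _ i (by simp), one_ne_zero, ?_⟩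
      rw [hz]
      simp) 8 le_rfl
  apply ratext_of_gens K p hp
  intro f hf
  apply hp' f _ hf
  have : {j : Fin 8 | j.1 < 8} = Set.univ := by ext j; simp
  rw [this, Set.image_univ, hgen]
  trivial

end Char2

section Descent

variable (K L : Type) [Field K] [Field L] [Algebra K L]

/-- Action of `Gal(L/K)` on the coefficients of rational functions. -/
def cAct (τ : L ≃ₐ[K] L) : RFF L (Fin 8) ≃ₐ[K] RFF L (Fin 8) :=
  IsFractionRing.fieldEquivOfAlgEquivHom K (RFF L (Fin 8)) (MvPolynomial.mapAlgEquiv (Fin 8) τ)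

lemma cAct_algebraMap (τ : L ≃ₐ[K] L) (q : MvPolynomial (Fin 8) L) :
    cAct K L τ (algebraMap _ _ q) = algebraMap _ _ (MvPolynomial.map (τ : L →+* L) q) := by
  simp [cAct, IsFractionRing.fieldEquivOfAlgEquivHom_apply]

lemma cAct_L (τ : L ≃ₐ[K] L) (a : L) :
    cAct K L τ (algebraMap L _ a) = algebraMap L _ (τ a) := by
  rw [IsScalarTower.algebraMap_apply L (MvPolynomial (Fin 8) L) (RFF L (Fin 8)), cAct_algebraMap]
  rw [MvPolynomial.algebraMap_eq, MvPolynomial.map_C]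
  rfl

lemma cAct_X (τ : L ≃ₐ[K] L) (i : Fin 8) : cAct K L τ (Xvar L (Fin 8) i) = Xvar L (Fin 8) i := by
  simp [Xvar, cAct_algebraMap]

lemma cAct_sg (τ : L ≃ₐ[K] L) (f : RFF L (Fin 8)) :
    cAct K L τ (sg L f) = sg L (cAct K L τ f) := by
  obtain ⟨a, b, -, rfl⟩ := IsFractionRing.div_surjective (MvPolynomial (Fin 8) L) f
  simp only [map_div₀, cAct_algebraMap, permHom_algebraMap, MvPolynomial.map_rename]

/-- The inclusion `K(x) → L(x)`. -/
def iota : RFF K (Fin 8) →ₐ[K] RFF L (Fin 8) :=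
  IsFractionRing.liftAlgHom (A := MvPolynomial (Fin 8) K) (K := RFF K (Fin 8))
    (g := (IsScalarTower.toAlgHom K (MvPolynomial (Fin 8) L) (RFF L (Fin 8))).comp
      (MvPolynomial.mapAlgHom (Algebra.ofId K L)))
    (by
      rw [AlgHom.coe_comp]
      exact (IsFractionRing.injective (MvPolynomial (Fin 8) L) (RFF L (Fin 8))).comp
        (MvPolynomial.map_injective _ (algebraMap K L).injective))

lemma iota_algebraMap (q : MvPolynomial (Fin 8) K) :
    iota K L (algebraMap _ _ q) = algebraMap _ _ (MvPolynomial.map (algebraMap K L) q) := by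
  rw [iota, IsFractionRing.liftAlgHom_apply, IsFractionRing.lift_algebraMap]
  rfl

lemma iota_sg (f : RFF K (Fin 8)) : iota K L (sg K f) = sg L (iota K L f) := by
  obtain ⟨a, b, -, rfl⟩ := IsFractionRing.div_surjective (MvPolynomial (Fin 8) K) f
  simp only [map_div₀, iota_algebraMap, permHom_algebraMap, MvPolynomial.map_rename]

lemma cAct_iota (τ : L ≃ₐ[K] L) (f : RFF K (Fin 8)) : cAct K L τ (iota K L f) = iota K L f := by
  obtain ⟨a, b, -, rfl⟩ := IsFractionRing.div_surjective (MvPolynomial (Fin 8) K) f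
  simp only [map_div₀, iota_algebraMap, cAct_algebraMap, MvPolynomial.map_map]
  have : (τ : L →+* L).comp (algebraMap K L) = algebraMap K L := by ext x; simp
  rw [this]

lemma poly_descent [FiniteDimensional K L] [IsGalois K L] (q : MvPolynomial (Fin 8) L)
    (h : ∀ τ : L ≃ₐ[K] L, MvPolynomial.map (τ : L →+* L) q = q) :
    ∃ r : MvPolynomial (Fin 8) K, MvPolynomial.map (algebraMap K L) r = q := by
  have : q ∈ Set.range (MvPolynomial.map (σ := Fin 8) (algebraMap K L)) := by
    rw [MvPolynomial.mem_range_map_iff_coeffs_subset]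
    intro c hc
    rw [Finset.mem_coe, MvPolynomial.mem_coeffs_iff] at hc
    obtain ⟨n, -, rfl⟩ := hc
    rw [IsGalois.mem_range_algebraMap_iff_fixed]
    intro τ
    have := congrArg (MvPolynomial.coeff n) (h τ)
    rwa [MvPolynomial.coeff_map] at this
  exact this

lemma descent [FiniteDimensional K L] [IsGalois K L] (f : RFF L (Fin 8))
    (h : ∀ τ : L ≃ₐ[K] L, cAct K L τ f = f) : ∃ g, iota K L g = f := by
  classical
  obtain ⟨a, b, hb, rfl⟩ := IsFractionRing.div_surjective (MvPolynomial (Fin 8) L) f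
  have hb0 : b ≠ 0 := nonZeroDivisors.ne_zero hb
  set P : MvPolynomial (Fin 8) L := ∏ τ : L ≃ₐ[K] L, MvPolynomial.map (τ : L →+* L) b with hP
  set D : MvPolynomial (Fin 8) L := ∏ τ ∈ Finset.univ.erase (1 : L ≃ₐ[K] L), MvPolynomial.map (τ : L →+* L) b with hD
  have hPD : P = b * D := by
    rw [hP, ← Finset.mul_prod_erase _ _ (Finset.mem_univ (1 : L ≃ₐ[K] L))]
    congr 1
    exact MvPolynomial.map_id b
  have hP0 : P ≠ 0 := by
    rw [hP, Finset.prod_ne_zero_iff]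
    intro τ _ h0
    exact hb0 ((MvPolynomial.map_injective _ (τ : L →+* L).injective) (by rw [h0, map_zero]))
  have hPfix : ∀ τ : L ≃ₐ[K] L, MvPolynomial.map (τ : L →+* L) P = P := by
    intro τ
    rw [hP, map_prod]
    refine Fintype.prod_equiv (Equiv.mulLeft τ) _ _ ?_
    intro x
    rw [MvPolynomial.map_map]
    rfl
  have hinj := IsFractionRing.injective (MvPolynomial (Fin 8) L) (RFF L (Fin 8))
  have hP0' : algebraMap _ (RFF L (Fin 8)) P ≠ 0 := by
    intro h0; exact hP0 (hinj (by rw [h0, map_zero]))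
  have hb0' : algebraMap _ (RFF L (Fin 8)) b ≠ 0 := by
    intro h0; exact hb0 (hinj (by rw [h0, map_zero]))
  have hfP : algebraMap _ (RFF L (Fin 8)) (a * D) =
      algebraMap _ _ a / algebraMap _ _ b * algebraMap _ _ P := by
    rw [hPD, map_mul, map_mul]
    field_simp
  obtain ⟨r, hr⟩ := poly_descent K L P hPfix
  obtain ⟨s, hs⟩ := poly_descent K L (a * D) (by
    intro τ
    apply hinj
    rw [← cAct_algebraMap, hfP, map_mul, h τ, cAct_algebraMap, hPfix])
  refine ⟨algebraMap _ _ s / algebraMap _ _ r, ?_⟩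
  rw [map_div₀, iota_algebraMap, iota_algebraMap, hr, hs, hfP]
  field_simp

lemma ratext_of_descent [FiniteDimensional K L] [IsGalois K L] (t : Fin 8 → RFF L (Fin 8))
    (hs : ∀ i, sg L (t i) = t i) (hc : ∀ i (τ : L ≃ₐ[K] L), cAct K L τ (t i) = t i)
    (hall : ∀ f, sg L f = f → (∀ τ : L ≃ₐ[K] L, cAct K L τ f = f) →
      f ∈ IntermediateField.adjoin K (Set.range t)) :
    IsRatExt K ↥(fixedSub K (Fin 8) (Subgroup.zpowers (finRotate 8))) := by
  choose p hp using fun i => descent K L (t i) (hc i)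
  apply ratext_of_gens K p
  · intro i
    apply (iota K L).injective
    change iota K L _ = iota K L _
    rw [iota_sg, hp, hs]
  · intro f hf
    have h1 := hall (iota K L f) (by rw [← iota_sg, hf]) (fun τ => cAct_iota K L τ f)
    have h2 : t = iota K L ∘ p := by ext1 i; exact (hp i).symm
    rw [h2, Set.range_comp, ← IntermediateField.adjoin_map] at h1
    obtain ⟨g, hg, hgf⟩ := h1
    exact (iota K L).injective hgf ▸ hg

end Descent

section Eigen

variable {L : Type} [Field L]

/-- Polynomial eigenvector. -/
def ypol (ζ : L) (j : ℕ) : MvPolynomial (Fin 8) L :=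
  ∑ i : Fin 8, MvPolynomial.C (ζ ^ (7 * i.1 * j)) * MvPolynomial.X i

/-- Eigenvectors of the cyclic shift. -/
def yv (ζ : L) (j : ℕ) : RFF L (Fin 8) :=
  ∑ i : Fin 8, algebraMap L _ (ζ ^ (7 * i.1 * j)) * Xvar L (Fin 8) i

lemma yv_eq (ζ : L) (j : ℕ) : yv ζ j = algebraMap _ _ (ypol ζ j) := by
  rw [yv, ypol, map_sum]
  refine Finset.sum_congr rfl fun i _ => ?_
  rw [map_mul, Xvar, ← MvPolynomial.algebraMap_eq, ← IsScalarTower.algebraMap_apply]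

variable {ζ : L} (hζ : IsPrimitiveRoot ζ 8)
include hζ

lemma two_ne_of_prim : (2 : L) ≠ 0 := by
  intro h2
  have h8 : ((8 : ℕ) : L) ≠ 0 := by
    have : NeZero (8 : ℕ) := ⟨by norm_num⟩
    exact (hζ.neZero').out
  apply h8
  have : ((8 : ℕ) : L) = 2 * 4 := by norm_num
  rw [this, h2, zero_mul]

lemma zeta4 : ζ ^ 4 = -1 := by
  have h8 : ζ ^ 8 = 1 := hζ.pow_eq_one
  have h4 : ζ ^ 4 ≠ 1 := hζ.pow_ne_one_of_pos_of_lt (by norm_num) (by norm_num)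
  have : (ζ ^ 4 - 1) * (ζ ^ 4 + 1) = 0 := by linear_combination h8
  rcases mul_eq_zero.1 this with h | h
  · exact absurd (sub_eq_zero.1 h) h4
  · exact eq_neg_of_add_eq_zero_left h

lemma yv_mod (j : ℕ) : yv ζ (j + 8) = yv ζ j := by
  unfold yv
  refine Finset.sum_congr rfl fun i _ => ?_
  have : ζ ^ (7 * i.1 * (j + 8)) = ζ ^ (7 * i.1 * j) * (ζ ^ 8) ^ (7 * i.1) := by
    rw [← pow_mul, ← pow_add]; congr 1; ring
  rw [this, hζ.pow_eq_one, one_pow, mul_one]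

lemma yv_modn (j n : ℕ) : yv ζ (j + 8 * n) = yv ζ j := by
  induction n with
  | zero => rfl
  | succ n ih => rw [mul_add, ← add_assoc, mul_one, yv_mod hζ, ih]

lemma sg_yv (j : ℕ) : sg L (yv ζ j) = algebraMap L _ ζ ^ j * yv ζ j := by
  unfold yv
  rw [map_sum, Finset.mul_sum]
  rw [← Equiv.sum_comp (finRotate 8) (fun i => algebraMap L _ ζ ^ j * (algebraMap L _ (ζ ^ (7 * i.1 * j)) * Xvar L (Fin 8) i))]
  refine Finset.sum_congr rfl fun i _ => ?_
  rw [map_mul, permHom_Xvar, AlgEquiv.commutes, ← map_pow, ← mul_assoc, ← map_mul]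
  congr 2
  have h8 := hζ.pow_eq_one
  have key : ∀ n : ℕ, ζ ^ (7 * n * j) = ζ ^ j * ζ ^ (7 * (n + 1) * j) := by
    intro n
    have : ζ ^ j * ζ ^ (7 * (n + 1) * j) = ζ ^ (7 * n * j) * (ζ ^ 8) ^ j := by
      rw [← pow_mul, ← pow_add, ← pow_add]; congr 1; ring
    rw [this, h8, one_pow, mul_one]
  rw [key]
  congr 1
  by_cases hi : i = 7
  · subst hi
    have : finRotate 8 7 = 0 := by decide
    rw [this]
    have : ζ ^ (7 * (((7 : Fin 8) : ℕ) + 1) * j) = (ζ ^ 8) ^ (7 * j) := by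
      rw [← pow_mul]; congr 1; simp; ring
    rw [this, h8]; simp
  · have : (finRotate 8 i).1 = i.1 + 1 := by
      revert i; decide
    rw [this]

lemma geom8 (m : ℕ) : ∑ i ∈ Finset.range 8, ζ ^ (i * m) = if 8 ∣ m then 8 else 0 := by
  have h8 := hζ.pow_eq_one
  have h1 : ∀ i, ζ ^ (i * m) = (ζ ^ m) ^ i := fun i => by rw [← pow_mul, mul_comm]
  simp only [h1]
  split_ifs with h
  · rw [(hζ.pow_eq_one_iff_dvd m).2 h]
    simp
  · have hne : ζ ^ m ≠ 1 := fun h' => h ((hζ.pow_eq_one_iff_dvd m).1 h')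
    have h2 := mul_geom_sum (ζ ^ m) 8
    rw [← pow_mul, mul_comm m, pow_mul, h8, one_pow, sub_self] at h2
    exact (mul_eq_zero.1 h2).resolve_left (sub_ne_zero.2 hne)

lemma eval_ypol (j : ℕ) : MvPolynomial.eval (fun i : Fin 8 => ζ ^ i.1) (ypol ζ j) =
    if 8 ∣ 7 * j + 1 then 8 else 0 := by
  rw [← geom8 hζ, ← Fin.sum_univ_eq_sum_range (fun i => ζ ^ (i * (7 * j + 1))), ypol, map_sum]
  refine Finset.sum_congr rfl fun i _ => ?_
  simp only [map_mul, MvPolynomial.eval_C, MvPolynomial.eval_X, ← pow_add]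
  congr 1
  ring

omit hζ in
lemma yv_ne_zero (j : ℕ) : yv ζ j ≠ 0 := by
  rw [yv_eq]
  intro h
  have h1 : ypol ζ j = 0 :=
    (IsFractionRing.injective (MvPolynomial (Fin 8) L) (RFF L (Fin 8))) (by rw [h, map_zero])
  have h2 := congrArg (MvPolynomial.eval (Pi.single (0 : Fin 8) (1 : L))) h1
  rw [ypol, map_sum, Finset.sum_eq_single (0 : Fin 8)] at h2
  · simp at h2
  · intro i _ hi
    simp [hi]
  · simp

lemma eight_ne : (8 : L) ≠ 0 := by
  have : (8 : L) = 2 ^ 3 := by norm_num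
  rw [this]
  exact pow_ne_zero _ (two_ne_of_prim hζ)

lemma y17_ne : yv ζ 1 ^ 4 + yv ζ 7 ^ 4 ≠ 0 := by
  rw [yv_eq, yv_eq, ← map_pow, ← map_pow, ← map_add]
  intro h
  have h1 : ypol ζ 1 ^ 4 + ypol ζ 7 ^ 4 = 0 :=
    (IsFractionRing.injective (MvPolynomial (Fin 8) L) (RFF L (Fin 8))) (by rw [h, map_zero])
  have h2 := congrArg (MvPolynomial.eval (fun i : Fin 8 => ζ ^ i.1)) h1
  rw [map_add, map_pow, map_pow, eval_ypol hζ, eval_ypol hζ] at h2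
  norm_num at h2
  have : (4096 : L) = 8 ^ 4 := by norm_num
  rw [this] at h2
  exact pow_ne_zero 4 (eight_ne hζ) h2

lemma sum_yv : ∑ j ∈ Finset.range 8, yv ζ j = 8 * Xvar L (Fin 8) 0 := by
  simp only [yv]
  rw [Finset.sum_comm]
  have h1 : ∀ i : Fin 8, ∑ j ∈ Finset.range 8, algebraMap L (RFF L (Fin 8)) (ζ ^ (7 * i.1 * j)) * Xvar L (Fin 8) i
      = algebraMap L (RFF L (Fin 8)) (if 8 ∣ 7 * i.1 then 8 else 0) * Xvar L (Fin 8) i := by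
    intro i
    rw [← geom8 hζ, ← Finset.sum_mul, map_sum]
    simp only [mul_comm]
  simp only [h1]
  rw [Finset.sum_eq_single (0 : Fin 8)]
  · rw [if_pos (by simp), map_ofNat (algebraMap L (RFF L (Fin 8))) 8]
  · intro i _ hi
    have : ¬ (8 ∣ 7 * i.1) := by
      revert i; decide
    simp [this]
  · simp

lemma top_of_yv (T : IntermediateField L (RFF L (Fin 8))) (h : ∀ j < 8, yv ζ j ∈ T) : T = ⊤ := by
  have h2 : IntermediateField.adjoin L (yv ζ '' {j | j < 8}) = ⊤ := by
    apply adjoin_top_of_stable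
    · have h8 : Xvar L (Fin 8) 0 = algebraMap L (RFF L (Fin 8)) (8⁻¹) * ∑ j ∈ Finset.range 8, yv ζ j := by
        rw [sum_yv hζ, map_inv₀, ← mul_assoc]
        have : algebraMap L (RFF L (Fin 8)) 8 = 8 := map_ofNat _ 8
        rw [this, inv_mul_cancel₀, one_mul]
        rw [← this]
        exact (map_ne_zero _).2 (eight_ne hζ)
      rw [h8]
      refine mul_mem (IntermediateField.algebraMap_mem _ _) (sum_mem fun j hj => ?_)
      exact IntermediateField.subset_adjoin _ _ ⟨j, by simpa using hj, rfl⟩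
    · intro f hf
      have : IntermediateField.adjoin L (yv ζ '' {j | j < 8}) ≤
          (IntermediateField.adjoin L (yv ζ '' {j | j < 8})).comap (sg L : RFF L (Fin 8) →ₐ[L] _) := by
        rw [IntermediateField.adjoin_le_iff]
        rintro _ ⟨j, hj, rfl⟩
        change sg L (yv ζ j) ∈ IntermediateField.adjoin L (yv ζ '' {j | j < 8})
        rw [sg_yv hζ]
        exact mul_mem (pow_mem (IntermediateField.algebraMap_mem _ _) _) (IntermediateField.subset_adjoin _ _ ⟨j, hj, rfl⟩)
      exact this hf
  rw [eq_top_iff, ← h2, IntermediateField.adjoin_le_iff]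
  rintro _ ⟨j, hj, rfl⟩
  exact h j hj

end Eigen

lemma avg_mem {K E : Type} [Field K] [Field E] [Algebra K E] (M : IntermediateField K E) (Y : E)
    (hY : IsAlgebraic M Y) (f : E) (hf : f ∈ IntermediateField.adjoin M {Y})
    (T : E →ₗ[M] E) (hT : ∀ n : ℕ, T (Y ^ n) ∈ M) : T f ∈ M := by
  rw [← IntermediateField.mem_toSubalgebra,
    IntermediateField.adjoin_simple_toSubalgebra_of_isAlgebraic hY,
    Algebra.adjoin_singleton_eq_range_aeval] at hf
  obtain ⟨q, rfl⟩ := hf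
  change T (Polynomial.aeval Y q) ∈ M
  induction q using Polynomial.induction_on' with
  | add p q hp hq => rw [map_add, map_add]; exact add_mem hp hq
  | monomial n a =>
    rw [Polynomial.aeval_monomial, ← Algebra.smul_def, map_smul, Algebra.smul_def]
    exact mul_mem a.2 (hT n)

lemma mem_adj_simple {K E : Type} [Field K] [Field E] [Algebra K E] (S : Set E) (Y f : E)
    (hf : f ∈ IntermediateField.adjoin K (insert Y S)) :
    f ∈ IntermediateField.adjoin (IntermediateField.adjoin K S) {Y} := by
  have : IntermediateField.adjoin K (insert Y S) ≤
      (IntermediateField.adjoin (IntermediateField.adjoin K S) {Y}).restrictScalars K := by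
    rw [IntermediateField.adjoin_le_iff]
    intro x hx
    rw [SetLike.mem_coe, IntermediateField.mem_restrictScalars]
    rcases Set.mem_insert_iff.1 hx with hx | hx
    · rw [hx]; exact IntermediateField.mem_adjoin_simple_self _ _
    · exact IntermediateField.algebraMap_mem _ (⟨x, IntermediateField.subset_adjoin _ _ hx⟩ : IntermediateField.adjoin K S)
  exact this hf

lemma fix_adjoin {K E : Type} [Field K] [Field E] [Algebra K E] (S : Set E) (A : E ≃ₐ[K] E)
    (h : ∀ x ∈ S, A x = x) (f : E) (hf : f ∈ IntermediateField.adjoin K S) : A f = f := by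
  induction hf using IntermediateField.adjoin_induction with
  | mem x hx => exact h x hx
  | algebraMap x => exact A.commutes x
  | add x y _ _ hx hy => rw [map_add, hx, hy]
  | inv x _ hx => rw [map_inv₀, hx]
  | mul x y _ _ hx hy => rw [map_mul, hx, hy]

/-- make a ring automorphism fixing `M` into an `M`-linear map -/
def linOf {K E : Type} [Field K] [Field E] [Algebra K E] (M : IntermediateField K E) (A : E ≃ₐ[K] E)
    (h : ∀ x ∈ M, A x = x) : E →ₗ[M] E where
  toFun := A
  map_add' := map_add A
  map_smul' := by
    rintro ⟨m, hm⟩ x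
    simp only [Algebra.smul_def, map_mul, RingHom.id_apply]
    congr 1
    exact h m hm


lemma alg_of_pow {K E : Type} [Field K] [Field E] [Algebra K E] (M : IntermediateField K E) (Y : E)
    (h : Y ^ 8 ∈ M) : IsAlgebraic M Y := by
  generalize hx : Y ^ 8 = x at h
  have h1 : IsAlgebraic M x := isAlgebraic_algebraMap (⟨x, h⟩ : M)
  rw [← hx] at h1
  exact h1.of_pow (by norm_num)

section Core

variable (K L : Type) [Field K] [Field L] [Algebra K L]

lemma L_mem {ζ : L} (hL : IntermediateField.adjoin K {ζ} = ⊤) (M : IntermediateField K (RFF L (Fin 8)))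
    (hz : algebraMap L (RFF L (Fin 8)) ζ ∈ M) (a : L) : algebraMap L (RFF L (Fin 8)) a ∈ M := by
  have ha : a ∈ IntermediateField.adjoin K {ζ} := by rw [hL]; trivial
  induction ha using IntermediateField.adjoin_induction with
  | mem x hx => rw [Set.mem_singleton_iff.1 hx]; exact hz
  | algebraMap x => rw [← IsScalarTower.algebraMap_apply]; exact M.algebraMap_mem x
  | add x y _ _ hx hy => rw [map_add]; exact add_mem hx hy
  | inv x _ hx => rw [map_inv₀]; exact inv_mem hx
  | mul x y _ _ hx hy => rw [map_mul]; exact mul_mem hx hy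

lemma core_rat [FiniteDimensional K L] [IsGalois K L] {ζ : L} (hζ : IsPrimitiveRoot ζ 8)
    (hL : IntermediateField.adjoin K {ζ} = ⊤)
    (hcard : (Fintype.card (L ≃ₐ[K] L) : L) ≠ 0)
    (t : Fin 8 → RFF L (Fin 8))
    (hs : ∀ i, sg L (t i) = t i) (hc : ∀ (τ : L ≃ₐ[K] L) i, cAct K L τ (t i) = t i)
    (hY8 : ∀ M : IntermediateField K (RFF L (Fin 8)), (∀ i, t i ∈ M) → (∀ a, algebraMap L _ a ∈ M) →
      yv ζ 1 ^ 8 ∈ M)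
    (hgen : ∀ M : IntermediateField K (RFF L (Fin 8)), (∀ i, t i ∈ M) → (∀ a, algebraMap L _ a ∈ M) →
      yv ζ 1 ∈ M → ∀ j < 8, yv ζ j ∈ M) :
    IsRatExt K ↥(fixedSub K (Fin 8) (Subgroup.zpowers (finRotate 8))) := by
  apply ratext_of_descent K L t hs (fun i τ => hc τ i)
  intro f hfs hfc
  set z : RFF L (Fin 8) := algebraMap L _ ζ with hz
  set Y : RFF L (Fin 8) := yv ζ 1 with hY
  set M := IntermediateField.adjoin K (Set.range t) with hM
  set M1 := IntermediateField.adjoin K (insert z (Set.range t)) with hM1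
  set M2 := IntermediateField.adjoin K (insert Y (insert z (Set.range t))) with hM2
  have hL1 : ∀ a, algebraMap L _ a ∈ M1 := L_mem K L hL M1
    (IntermediateField.subset_adjoin _ _ (Set.mem_insert _ _))
  have ht1 : ∀ i, t i ∈ M1 := fun i =>
    IntermediateField.subset_adjoin _ _ (Set.mem_insert_of_mem _ ⟨i, rfl⟩)
  have h12 : M1 ≤ M2 := IntermediateField.adjoin.mono _ _ _ (Set.subset_insert _ _)
  have hY2 : Y ∈ M2 := IntermediateField.subset_adjoin _ _ (Set.mem_insert _ _)
  have hf2 : f ∈ M2 := by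
    have htop := top_of_yv hζ (M2.toSubfield.toIntermediateField (fun a => h12 (hL1 a)))
      (fun j hj => hgen M2 (fun i => h12 (ht1 i)) (fun a => h12 (hL1 a)) hY2 j hj)
    have : f ∈ (M2.toSubfield.toIntermediateField (fun a => h12 (hL1 a)) : IntermediateField L (RFF L (Fin 8))) := by
      rw [htop]; trivial
    exact this
  have hY8' : Y ^ 8 ∈ M1 := hY8 M1 ht1 hL1
  have hf1 : f ∈ M1 := by
    let B : RFF L (Fin 8) ≃ₐ[K] RFF L (Fin 8) := (sg L).restrictScalars K
    have hB : ∀ x ∈ M1, B x = x := fun x hx => fix_adjoin _ B (by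
      intro x hx
      rcases Set.mem_insert_iff.1 hx with hx | ⟨i, rfl⟩
      · rw [hx]; exact (sg L).commutes ζ
      · exact hs i) x hx
    let T : RFF L (Fin 8) →ₗ[M1] RFF L (Fin 8) := ∑ i ∈ Finset.range 8, (linOf M1 B hB) ^ i
    have hTf : T f = 8 * f := by
      have : ∀ i, ((linOf M1 B hB) ^ i) f = f := by
        intro i
        induction i with
        | zero => rfl
        | succ i ih =>
          rw [pow_succ', Module.End.mul_apply, ih]
          exact hfs
      simp only [T, LinearMap.sum_apply, this]
      simp
    have hTY : ∀ n : ℕ, T (Y ^ n) ∈ M1 := by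
      intro n
      have : ∀ i, ((linOf M1 B hB) ^ i) (Y ^ n) = algebraMap L _ (ζ ^ (i * n)) * Y ^ n := by
        intro i
        induction i with
        | zero => simp
        | succ i ih =>
          rw [pow_succ', Module.End.mul_apply, ih]
          change sg L _ = _
          rw [map_mul, AlgEquiv.commutes, map_pow (sg L), hY, sg_yv hζ, add_mul, pow_add, map_mul, one_mul, pow_one, mul_pow, map_pow _ ζ n]
          ring
      simp only [T, LinearMap.sum_apply, this]
      rw [← Finset.sum_mul, ← map_sum, geom8 hζ]
      split_ifs with h
      · obtain ⟨m, rfl⟩ := h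
        rw [pow_mul]
        exact mul_mem (hL1 _) (pow_mem hY8' _)
      · rw [map_zero, zero_mul]; exact zero_mem _
    have halg : IsAlgebraic M1 Y := alg_of_pow M1 Y hY8'
    clear_value T
    have h1 : T f ∈ M1 := avg_mem M1 Y halg f (mem_adj_simple _ _ _ hf2) T hTY
    rw [hTf] at h1
    have h8 : algebraMap L (RFF L (Fin 8)) 8 = 8 := map_ofNat _ 8
    have h3 : f = algebraMap L (RFF L (Fin 8)) (8⁻¹) * (8 * f) := by
      rw [map_inv₀, h8, ← mul_assoc, inv_mul_cancel₀, one_mul]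
      rw [← h8]
      exact (map_ne_zero _).2 (eight_ne hζ)
    rw [h3]
    exact mul_mem (hL1 _) h1
  have hfix : ∀ τ : L ≃ₐ[K] L, ∀ x ∈ M, cAct K L τ x = x := fun τ x hx =>
    fix_adjoin _ (cAct K L τ) (by rintro _ ⟨i, rfl⟩; exact hc τ i) x hx
  let T : RFF L (Fin 8) →ₗ[M] RFF L (Fin 8) := ∑ τ : L ≃ₐ[K] L, linOf M (cAct K L τ) (hfix τ)
  have hTa : ∀ x, T x = ∑ τ : L ≃ₐ[K] L, cAct K L τ x := by
    intro x
    simp only [T, LinearMap.sum_apply]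
    rfl
  have hTf : T f = (Fintype.card (L ≃ₐ[K] L) : RFF L (Fin 8)) * f := by
    rw [hTa, Finset.sum_congr rfl (fun τ _ => hfc τ)]
    simp
  have halg : IsAlgebraic M z := by
    have h1 : IsAlgebraic K ζ := Algebra.IsAlgebraic.isAlgebraic ζ
    exact (h1.algebraMap (A := RFF L (Fin 8))).tower_top M
  have h1 := avg_mem M z halg f (mem_adj_simple _ _ _ hf1) T (by
    intro n
    rw [hTa]
    have : ∀ τ : L ≃ₐ[K] L, cAct K L τ (z ^ n) = algebraMap L _ (τ (ζ ^ n)) := by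
      intro τ
      rw [hz, ← map_pow (algebraMap L (RFF L (Fin 8))), cAct_L]
    simp only [this]
    rw [← map_sum, ← trace_eq_sum_automorphisms, ← IsScalarTower.algebraMap_apply]
    exact M.algebraMap_mem _)
  rw [hTf] at h1
  have hc' : (Fintype.card (L ≃ₐ[K] L) : RFF L (Fin 8)) ≠ 0 := by
    rw [← map_natCast (algebraMap L (RFF L (Fin 8)))]
    exact (map_ne_zero _).2 hcard
  have h3 : f = (Fintype.card (L ≃ₐ[K] L) : RFF L (Fin 8))⁻¹ * ((Fintype.card (L ≃ₐ[K] L) : RFF L (Fin 8)) * f) := by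
    rw [← mul_assoc, inv_mul_cancel₀ hc', one_mul]
  rw [h3]
  exact mul_mem (inv_mem (natCast_mem _ _)) h1

end Core

section Cases

variable {L : Type} [Field L]

/-- `f` has weight `n` for the cyclic shift. -/
def Wt (ζ : L) (f : RFF L (Fin 8)) (n : ℕ) : Prop :=
  sg L f = algebraMap L _ ζ ^ n * f

variable {ζ : L} (hζ : IsPrimitiveRoot ζ 8)

lemma Wt.mul {f g : RFF L (Fin 8)} {m n : ℕ} (hf : Wt ζ f m) (hg : Wt ζ g n) :
    Wt ζ (f * g) (m + n) := by
  unfold Wt at *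
  rw [map_mul, hf, hg, pow_add]; ring

lemma Wt.pow {f : RFF L (Fin 8)} {m : ℕ} (hf : Wt ζ f m) (n : ℕ) : Wt ζ (f ^ n) (m * n) := by
  unfold Wt at *
  rw [map_pow, hf, pow_mul, mul_pow]

include hζ in
lemma zE8 : (algebraMap L (RFF L (Fin 8)) ζ) ^ 8 = 1 := by
  rw [← map_pow, hζ.pow_eq_one, map_one]

include hζ in
lemma Wt.inv {f : RFF L (Fin 8)} {m : ℕ} (hf : Wt ζ f m) : Wt ζ f⁻¹ (7 * m) := by
  unfold Wt at *
  rw [map_inv₀, hf, mul_inv]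
  congr 1
  apply inv_eq_of_mul_eq_one_right
  rw [← pow_add]
  have : m + 7 * m = 8 * m := by ring
  rw [this, pow_mul, zE8 hζ, one_pow]

include hζ in
lemma Wt.div {f g : RFF L (Fin 8)} {m n : ℕ} (hf : Wt ζ f m) (hg : Wt ζ g n) :
    Wt ζ (f / g) (m + 7 * n) := by
  rw [div_eq_mul_inv]
  exact hf.mul (hg.inv hζ)

include hζ in
lemma Wt.fix {f : RFF L (Fin 8)} {m : ℕ} (hf : Wt ζ f m) (hm : 8 ∣ m) : sg L f = f := by
  obtain ⟨k, rfl⟩ := hm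
  unfold Wt at hf
  rwa [pow_mul, zE8 hζ, one_pow, one_mul] at hf

include hζ in
lemma Wt.y (j : ℕ) : Wt ζ (yv ζ j) j := sg_yv hζ j

lemma vec8 {E : Type} {P : E → Prop} {a0 a1 a2 a3 a4 a5 a6 a7 : E} (h0 : P a0) (h1 : P a1)
    (h2 : P a2) (h3 : P a3) (h4 : P a4) (h5 : P a5) (h6 : P a6) (h7 : P a7) :
    ∀ i, P (![a0, a1, a2, a3, a4, a5, a6, a7] i) := by
  intro i
  fin_cases i <;> assumption

lemma lt8 {P : ℕ → Prop} (h0 : P 0) (h1 : P 1)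
    (h2 : P 2) (h3 : P 3) (h4 : P 4) (h5 : P 5) (h6 : P 6) (h7 : P 7) : ∀ j < 8, P j := by
  intro j hj
  interval_cases j <;> assumption

variable (K : Type) [Field K] [Algebra K L]

lemma cAct_yv (τ : L ≃ₐ[K] L) (k : ℕ) (hk : τ ζ = ζ ^ k) (j : ℕ) :
    cAct K L τ (yv ζ j) = yv ζ (k * j) := by
  unfold yv
  rw [map_sum]
  refine Finset.sum_congr rfl fun i _ => ?_
  rw [map_mul, cAct_L, cAct_X, map_pow, hk, ← pow_mul]
  congr 3
  ring

lemma cAct_one (f : RFF L (Fin 8)) : cAct K L 1 f = f := by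
  obtain ⟨a, b, -, rfl⟩ := IsFractionRing.div_surjective (MvPolynomial (Fin 8) L) f
  have : ((1 : L ≃ₐ[K] L) : L →+* L) = RingHom.id L := rfl
  rw [map_div₀, cAct_algebraMap, cAct_algebraMap, this, MvPolynomial.map_id, MvPolynomial.map_id]

include hζ in
lemma case1 [FiniteDimensional K L] [IsGalois K L] 
    (hL : IntermediateField.adjoin K {ζ} = ⊤)
    (hG : ∀ τ : L ≃ₐ[K] L, τ = 1) :
    IsRatExt K ↥(fixedSub K (Fin 8) (Subgroup.zpowers (finRotate 8))) := by
  let t : Fin 8 → RFF L (Fin 8) := ![yv ζ 0, yv ζ 1 ^ 8, yv ζ 2 / yv ζ 1 ^ 2, yv ζ 3 / yv ζ 1 ^ 3,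
    yv ζ 4 / yv ζ 1 ^ 4, yv ζ 5 / yv ζ 1 ^ 5, yv ζ 6 / yv ζ 1 ^ 6, yv ζ 7 / yv ζ 1 ^ 7]
  have hd : ∀ j, sg L (yv ζ j / yv ζ 1 ^ j) = yv ζ j / yv ζ 1 ^ j := fun j =>
    ((Wt.y hζ j).div hζ ((Wt.y hζ 1).pow j)).fix hζ ⟨j, by ring⟩
  have hcard : Fintype.card (L ≃ₐ[K] L) = 1 := by
    rw [Fintype.card_eq_one_iff]; exact ⟨1, hG⟩
  refine core_rat K L hζ hL (by rw [hcard]; simp) t ?_ ?_ ?_ ?_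
  · exact vec8 (P := fun f => sg L f = f) ((Wt.y hζ 0).fix hζ ⟨0, rfl⟩) (((Wt.y hζ 1).pow 8).fix hζ ⟨1, rfl⟩) (hd 2) (hd 3) (hd 4) (hd 5) (hd 6) (hd 7)
  · intro τ i
    rw [hG τ, cAct_one]
  · intro M hM _
    exact hM 1
  · intro M hM _ hY
    have hy : ∀ j, yv ζ j / yv ζ 1 ^ j ∈ M → yv ζ j ∈ M := by
      intro j hj
      have : yv ζ j = yv ζ j / yv ζ 1 ^ j * yv ζ 1 ^ j := by
        field_simp [yv_ne_zero (ζ := ζ) 1]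
      rw [this]
      exact mul_mem hj (pow_mem hY j)
    exact lt8 (hM 0) hY (hy 2 (hM 2)) (hy 3 (hM 3)) (hy 4 (hM 4)) (hy 5 (hM 5)) (hy 6 (hM 6)) (hy 7 (hM 7))

/-- recovering a pair from its trace forms -/
lemma pair_mem (M : IntermediateField K (RFF L (Fin 8))) (hM : ∀ a, algebraMap L _ a ∈ M)
    (a b : L) (hab : a ≠ b) (x y : RFF L (Fin 8)) (h1 : x + y ∈ M)
    (h2 : algebraMap L _ a * x + algebraMap L _ b * y ∈ M) : x ∈ M ∧ y ∈ M := by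
  have hne : algebraMap L (RFF L (Fin 8)) a - algebraMap L _ b ≠ 0 := by
    rw [← map_sub]; exact (map_ne_zero _).2 (sub_ne_zero.2 hab)
  have hx : x ∈ M := by
    have : x = ((algebraMap L _ a * x + algebraMap L _ b * y) - algebraMap L _ b * (x + y)) /
        (algebraMap L (RFF L (Fin 8)) a - algebraMap L _ b) := by
      rw [eq_div_iff hne]; ring
    rw [this]
    exact div_mem (sub_mem h2 (mul_mem (hM b) h1)) (sub_mem (hM a) (hM b))
  refine ⟨hx, ?_⟩
  have : y = (x + y) - x := by ring
  rw [this]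
  exact sub_mem h1 hx

lemma pair_fix (A : RFF L (Fin 8) ≃+* RFF L (Fin 8)) (x y c d : RFF L (Fin 8)) (hx : A x = y) (hy : A y = x)
    (hc : A c = d) (hd : A d = c) : A (x + y) = x + y ∧ A (c * x + d * y) = c * x + d * y := by
  constructor
  · rw [map_add, hx, hy, add_comm]
  · rw [map_add, map_mul, map_mul, hx, hy, hc, hd, add_comm]

lemma core2 [FiniteDimensional K L] [IsGalois K L] {ζ : L} (hζ : IsPrimitiveRoot ζ 8)
    (hL : IntermediateField.adjoin K {ζ} = ⊤)
    (τ : L ≃ₐ[K] L) (hG : ∀ τ' : L ≃ₐ[K] L, τ' = 1 ∨ τ' = τ)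
    (t : Fin 8 → RFF L (Fin 8))
    (hs : ∀ i, sg L (t i) = t i) (hc : ∀ i, cAct K L τ (t i) = t i)
    (hY8 : ∀ M : IntermediateField K (RFF L (Fin 8)), (∀ i, t i ∈ M) → (∀ a, algebraMap L _ a ∈ M) →
      yv ζ 1 ^ 8 ∈ M)
    (hgen : ∀ M : IntermediateField K (RFF L (Fin 8)), (∀ i, t i ∈ M) → (∀ a, algebraMap L _ a ∈ M) →
      yv ζ 1 ∈ M → ∀ j < 8, yv ζ j ∈ M) :
    IsRatExt K ↥(fixedSub K (Fin 8) (Subgroup.zpowers (finRotate 8))) := by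
  classical
  refine core_rat K L hζ hL ?_ t hs ?_ hY8 hgen
  · have h1 : Fintype.card (L ≃ₐ[K] L) ≤ 2 := by
      rw [← Finset.card_univ]
      refine (Finset.card_le_card (t := {1, τ}) ?_).trans Finset.card_le_two
      intro x _
      simpa using hG x
    have h2 : 0 < Fintype.card (L ≃ₐ[K] L) := Fintype.card_pos
    generalize Fintype.card (L ≃ₐ[K] L) = n at *
    interval_cases n
    · simp
    · exact_mod_cast two_ne_of_prim hζ
  · intro τ' i
    rcases hG τ' with rfl | rfl
    · exact cAct_one K _
    · exact hc i

lemma mem_of_div {M : IntermediateField K (RFF L (Fin 8))} {a b : RFF L (Fin 8)} (hb : b ≠ 0)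
    (h : a / b ∈ M) (hbM : b ∈ M) : a ∈ M := by
  have : a = a / b * b := by field_simp
  rw [this]
  exact mul_mem h hbM

include hζ in
lemma case3 [FiniteDimensional K L] [IsGalois K L]
    (hL : IntermediateField.adjoin K {ζ} = ⊤) (τ : L ≃ₐ[K] L) (hτ : τ ζ = ζ ^ 3)
    (hG : ∀ τ' : L ≃ₐ[K] L, τ' = 1 ∨ τ' = τ) :
    IsRatExt K ↥(fixedSub K (Fin 8) (Subgroup.zpowers (finRotate 8))) := by
  have hA : ∀ j, cAct K L τ (yv ζ j) = yv ζ (3 * j) := cAct_yv K τ 3 hτ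
  have a0 : cAct K L τ (yv ζ 0) = yv ζ 0 := hA 0
  have a1 : cAct K L τ (yv ζ 1) = yv ζ 3 := hA 1
  have a2 : cAct K L τ (yv ζ 2) = yv ζ 6 := hA 2
  have a3 : cAct K L τ (yv ζ 3) = yv ζ 1 := (hA 3).trans (yv_modn hζ 1 1)
  have a4 : cAct K L τ (yv ζ 4) = yv ζ 4 := (hA 4).trans (yv_modn hζ 4 1)
  have a5 : cAct K L τ (yv ζ 5) = yv ζ 7 := (hA 5).trans (yv_modn hζ 7 1)
  have a6 : cAct K L τ (yv ζ 6) = yv ζ 2 := (hA 6).trans (yv_modn hζ 2 2)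
  have a7 : cAct K L τ (yv ζ 7) = yv ζ 5 := (hA 7).trans (yv_modn hζ 5 2)
  have hz1 : cAct K L τ (algebraMap L _ ζ) = algebraMap L _ (ζ ^ 3) := by rw [cAct_L, hτ]
  have hz2 : cAct K L τ (algebraMap L _ (ζ ^ 3)) = algebraMap L _ ζ := by
    rw [cAct_L, map_pow, hτ, ← pow_mul]
    exact congrArg _ (by rw [pow_eq_pow_mod _ hζ.pow_eq_one]; simp)
  have hne : ζ ≠ ζ ^ 3 := fun h => by
    have := hζ.pow_inj (i := 1) (j := 3) (by norm_num) (by norm_num) (by rwa [pow_one])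
    omega
  have n1 := yv_ne_zero (ζ := ζ) 1
  have n3 := yv_ne_zero (ζ := ζ) 3
  have P1 := pair_fix (cAct K L τ).toRingEquiv (yv ζ 1 / yv ζ 3 ^ 3) (yv ζ 3 / yv ζ 1 ^ 3) _ _
    (by change cAct K L τ _ = _; rw [map_div₀, map_pow, a1, a3])
    (by change cAct K L τ _ = _; rw [map_div₀, map_pow, a1, a3]) hz1 hz2
  have P2 := pair_fix (cAct K L τ).toRingEquiv (yv ζ 2 / yv ζ 1 ^ 2) (yv ζ 6 / yv ζ 3 ^ 2) _ _
    (by change cAct K L τ _ = _; rw [map_div₀, map_pow, a1, a2])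
    (by change cAct K L τ _ = _; rw [map_div₀, map_pow, a3, a6]) hz1 hz2
  have P3 := pair_fix (cAct K L τ).toRingEquiv (yv ζ 5 / yv ζ 1 ^ 5) (yv ζ 7 / yv ζ 3 ^ 5) _ _
    (by change cAct K L τ _ = _; rw [map_div₀, map_pow, a1, a5])
    (by change cAct K L τ _ = _; rw [map_div₀, map_pow, a3, a7]) hz1 hz2
  have s1 : sg L (yv ζ 1 / yv ζ 3 ^ 3) = yv ζ 1 / yv ζ 3 ^ 3 :=
    ((Wt.y hζ 1).div hζ ((Wt.y hζ 3).pow 3)).fix hζ (by norm_num)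
  have s2 : sg L (yv ζ 3 / yv ζ 1 ^ 3) = yv ζ 3 / yv ζ 1 ^ 3 :=
    ((Wt.y hζ 3).div hζ ((Wt.y hζ 1).pow 3)).fix hζ (by norm_num)
  have s3 : sg L (yv ζ 2 / yv ζ 1 ^ 2) = yv ζ 2 / yv ζ 1 ^ 2 :=
    ((Wt.y hζ 2).div hζ ((Wt.y hζ 1).pow 2)).fix hζ (by norm_num)
  have s4 : sg L (yv ζ 6 / yv ζ 3 ^ 2) = yv ζ 6 / yv ζ 3 ^ 2 :=
    ((Wt.y hζ 6).div hζ ((Wt.y hζ 3).pow 2)).fix hζ (by norm_num)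
  have s5 : sg L (yv ζ 5 / yv ζ 1 ^ 5) = yv ζ 5 / yv ζ 1 ^ 5 :=
    ((Wt.y hζ 5).div hζ ((Wt.y hζ 1).pow 5)).fix hζ (by norm_num)
  have s6 : sg L (yv ζ 7 / yv ζ 3 ^ 5) = yv ζ 7 / yv ζ 3 ^ 5 :=
    ((Wt.y hζ 7).div hζ ((Wt.y hζ 3).pow 5)).fix hζ (by norm_num)
  have sa : ∀ {x y : RFF L (Fin 8)}, sg L x = x → sg L y = y → sg L (x + y) = x + y :=
    fun hx hy => by rw [map_add, hx, hy]
  have sb : ∀ {x y : RFF L (Fin 8)} (c d : L), sg L x = x → sg L y = y →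
      sg L (algebraMap L _ c * x + algebraMap L _ d * y) = algebraMap L _ c * x + algebraMap L _ d * y :=
    fun c d hx hy => by rw [map_add, map_mul, map_mul, AlgEquiv.commutes, AlgEquiv.commutes, hx, hy]
  refine core2 K hζ hL τ hG ![yv ζ 1 / yv ζ 3 ^ 3 + yv ζ 3 / yv ζ 1 ^ 3,
    algebraMap L _ ζ * (yv ζ 1 / yv ζ 3 ^ 3) + algebraMap L _ (ζ ^ 3) * (yv ζ 3 / yv ζ 1 ^ 3),
    yv ζ 2 / yv ζ 1 ^ 2 + yv ζ 6 / yv ζ 3 ^ 2,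
    algebraMap L _ ζ * (yv ζ 2 / yv ζ 1 ^ 2) + algebraMap L _ (ζ ^ 3) * (yv ζ 6 / yv ζ 3 ^ 2),
    yv ζ 5 / yv ζ 1 ^ 5 + yv ζ 7 / yv ζ 3 ^ 5,
    algebraMap L _ ζ * (yv ζ 5 / yv ζ 1 ^ 5) + algebraMap L _ (ζ ^ 3) * (yv ζ 7 / yv ζ 3 ^ 5),
    yv ζ 0, yv ζ 4 / (yv ζ 1 * yv ζ 3)] ?_ ?_ ?_ ?_
  · exact vec8 (P := fun f => sg L f = f) (sa s1 s2) (sb _ _ s1 s2) (sa s3 s4) (sb _ _ s3 s4)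
      (sa s5 s6) (sb _ _ s5 s6) ((Wt.y hζ 0).fix hζ (by norm_num))
      (((Wt.y hζ 4).div hζ ((Wt.y hζ 1).mul (Wt.y hζ 3))).fix hζ (by norm_num))
  · exact vec8 (P := fun f => cAct K L τ f = f) P1.1 P1.2 P2.1 P2.2 P3.1 P3.2 a0
      (by rw [map_div₀, map_mul, a1, a3, a4, mul_comm (yv ζ 3)])
  · intro M hM hLM
    obtain ⟨p, q⟩ := pair_mem K M hLM ζ (ζ ^ 3) hne _ _ (hM 0) (hM 1)
    have : yv ζ 1 ^ 8 = ((yv ζ 1 / yv ζ 3 ^ 3) * (yv ζ 3 / yv ζ 1 ^ 3) ^ 3)⁻¹ := by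
      field_simp
    rw [this]
    exact inv_mem (mul_mem p (pow_mem q _))
  · intro M hM hLM hY
    obtain ⟨-, q1⟩ := pair_mem K M hLM ζ (ζ ^ 3) hne _ _ (hM 0) (hM 1)
    obtain ⟨p2, q2⟩ := pair_mem K M hLM ζ (ζ ^ 3) hne _ _ (hM 2) (hM 3)
    obtain ⟨p3, q3⟩ := pair_mem K M hLM ζ (ζ ^ 3) hne _ _ (hM 4) (hM 5)
    have hY3 := mem_of_div K (pow_ne_zero _ n1) q1 (pow_mem hY _)
    exact lt8 (hM 6) hY (mem_of_div K (pow_ne_zero _ n1) p2 (pow_mem hY _)) hY3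
      (mem_of_div K (mul_ne_zero n1 n3) (hM 7) (mul_mem hY hY3))
      (mem_of_div K (pow_ne_zero _ n1) p3 (pow_mem hY _))
      (mem_of_div K (pow_ne_zero _ n3) q2 (pow_mem hY3 _))
      (mem_of_div K (pow_ne_zero _ n3) q3 (pow_mem hY3 _))

end Cases

section Cases2

variable {L : Type} [Field L] {ζ : L} (hζ : IsPrimitiveRoot ζ 8) (K : Type) [Field K] [Algebra K L]

include hζ in
lemma case5 [FiniteDimensional K L] [IsGalois K L]
    (hL : IntermediateField.adjoin K {ζ} = ⊤) (τ : L ≃ₐ[K] L) (hτ : τ ζ = ζ ^ 5)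
    (hG : ∀ τ' : L ≃ₐ[K] L, τ' = 1 ∨ τ' = τ) :
    IsRatExt K ↥(fixedSub K (Fin 8) (Subgroup.zpowers (finRotate 8))) := by
  have hA : ∀ j, cAct K L τ (yv ζ j) = yv ζ (5 * j) := cAct_yv K τ 5 hτ
  have a0 : cAct K L τ (yv ζ 0) = yv ζ 0 := (hA 0).trans (yv_modn hζ 0 0)
  have a1 : cAct K L τ (yv ζ 1) = yv ζ 5 := (hA 1).trans (yv_modn hζ 5 0)
  have a2 : cAct K L τ (yv ζ 2) = yv ζ 2 := (hA 2).trans (yv_modn hζ 2 1)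
  have a3 : cAct K L τ (yv ζ 3) = yv ζ 7 := (hA 3).trans (yv_modn hζ 7 1)
  have a4 : cAct K L τ (yv ζ 4) = yv ζ 4 := (hA 4).trans (yv_modn hζ 4 2)
  have a5 : cAct K L τ (yv ζ 5) = yv ζ 1 := (hA 5).trans (yv_modn hζ 1 3)
  have a6 : cAct K L τ (yv ζ 6) = yv ζ 6 := (hA 6).trans (yv_modn hζ 6 3)
  have a7 : cAct K L τ (yv ζ 7) = yv ζ 3 := (hA 7).trans (yv_modn hζ 3 4)
  have hz1 : cAct K L τ (algebraMap L _ ζ) = algebraMap L _ (ζ ^ 5) := by rw [cAct_L, hτ]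
  have hz2 : cAct K L τ (algebraMap L _ (ζ ^ 5)) = algebraMap L _ ζ := by
    rw [cAct_L, map_pow, hτ, ← pow_mul]
    exact congrArg _ (by rw [pow_eq_pow_mod _ hζ.pow_eq_one]; simp)
  have hne : ζ ≠ ζ ^ 5 := fun h => by
    have := hζ.pow_inj (i := 1) (j := 5) (by norm_num) (by norm_num) (by rwa [pow_one])
    omega
  have n1 := yv_ne_zero (ζ := ζ) 1
  have n5 := yv_ne_zero (ζ := ζ) 5
  have P1 := pair_fix (cAct K L τ).toRingEquiv (yv ζ 1 ^ 3 * yv ζ 5) (yv ζ 5 ^ 3 * yv ζ 1) _ _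
    (by change cAct K L τ _ = _; rw [map_mul, map_pow, a1, a5])
    (by change cAct K L τ _ = _; rw [map_mul, map_pow, a1, a5]) hz1 hz2
  have P2 := pair_fix (cAct K L τ).toRingEquiv (yv ζ 3 / yv ζ 1 ^ 3) (yv ζ 7 / yv ζ 5 ^ 3) _ _
    (by change cAct K L τ _ = _; rw [map_div₀, map_pow, a1, a3])
    (by change cAct K L τ _ = _; rw [map_div₀, map_pow, a5, a7]) hz1 hz2
  have s1 : sg L (yv ζ 1 ^ 3 * yv ζ 5) = yv ζ 1 ^ 3 * yv ζ 5 :=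
    (((Wt.y hζ 1).pow 3).mul (Wt.y hζ 5)).fix hζ (by norm_num)
  have s2 : sg L (yv ζ 5 ^ 3 * yv ζ 1) = yv ζ 5 ^ 3 * yv ζ 1 :=
    (((Wt.y hζ 5).pow 3).mul (Wt.y hζ 1)).fix hζ (by norm_num)
  have s3 : sg L (yv ζ 3 / yv ζ 1 ^ 3) = yv ζ 3 / yv ζ 1 ^ 3 :=
    ((Wt.y hζ 3).div hζ ((Wt.y hζ 1).pow 3)).fix hζ (by norm_num)
  have s4 : sg L (yv ζ 7 / yv ζ 5 ^ 3) = yv ζ 7 / yv ζ 5 ^ 3 :=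
    ((Wt.y hζ 7).div hζ ((Wt.y hζ 5).pow 3)).fix hζ (by norm_num)
  have sa : ∀ {x y : RFF L (Fin 8)}, sg L x = x → sg L y = y → sg L (x + y) = x + y :=
    fun hx hy => by rw [map_add, hx, hy]
  have sb : ∀ {x y : RFF L (Fin 8)} (c d : L), sg L x = x → sg L y = y →
      sg L (algebraMap L _ c * x + algebraMap L _ d * y) = algebraMap L _ c * x + algebraMap L _ d * y :=
    fun c d hx hy => by rw [map_add, map_mul, map_mul, AlgEquiv.commutes, AlgEquiv.commutes, hx, hy]
  have hN : cAct K L τ (yv ζ 1 * yv ζ 5) = yv ζ 1 * yv ζ 5 := by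
    rw [map_mul, a1, a5, mul_comm]
  have wN : Wt ζ (yv ζ 1 * yv ζ 5) 6 := (Wt.y hζ 1).mul (Wt.y hζ 5)
  refine core2 K hζ hL τ hG ![yv ζ 1 ^ 3 * yv ζ 5 + yv ζ 5 ^ 3 * yv ζ 1,
    algebraMap L _ ζ * (yv ζ 1 ^ 3 * yv ζ 5) + algebraMap L _ (ζ ^ 5) * (yv ζ 5 ^ 3 * yv ζ 1),
    yv ζ 3 / yv ζ 1 ^ 3 + yv ζ 7 / yv ζ 5 ^ 3,
    algebraMap L _ ζ * (yv ζ 3 / yv ζ 1 ^ 3) + algebraMap L _ (ζ ^ 5) * (yv ζ 7 / yv ζ 5 ^ 3),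
    yv ζ 0, yv ζ 6 / (yv ζ 1 * yv ζ 5) ^ 1, yv ζ 4 / (yv ζ 1 * yv ζ 5) ^ 2,
    yv ζ 2 / (yv ζ 1 * yv ζ 5) ^ 3] ?_ ?_ ?_ ?_
  · exact vec8 (P := fun f => sg L f = f) (sa s1 s2) (sb _ _ s1 s2) (sa s3 s4) (sb _ _ s3 s4)
      ((Wt.y hζ 0).fix hζ (by norm_num))
      (((Wt.y hζ 6).div hζ (wN.pow 1)).fix hζ (by norm_num))
      (((Wt.y hζ 4).div hζ (wN.pow 2)).fix hζ (by norm_num))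
      (((Wt.y hζ 2).div hζ (wN.pow 3)).fix hζ (by norm_num))
  · exact vec8 (P := fun f => cAct K L τ f = f) P1.1 P1.2 P2.1 P2.2 a0
      (by rw [map_div₀, map_pow, hN, a6]) (by rw [map_div₀, map_pow, hN, a4])
      (by rw [map_div₀, map_pow, hN, a2])
  · intro M hM hLM
    obtain ⟨p, q⟩ := pair_mem K M hLM ζ (ζ ^ 5) hne _ _ (hM 0) (hM 1)
    have : yv ζ 1 ^ 8 = (yv ζ 1 ^ 3 * yv ζ 5) ^ 3 / (yv ζ 5 ^ 3 * yv ζ 1) := by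
      field_simp
    rw [this]
    exact div_mem (pow_mem p _) q
  · intro M hM hLM hY
    obtain ⟨p1, -⟩ := pair_mem K M hLM ζ (ζ ^ 5) hne _ _ (hM 0) (hM 1)
    obtain ⟨p2, q2⟩ := pair_mem K M hLM ζ (ζ ^ 5) hne _ _ (hM 2) (hM 3)
    have hY5 : yv ζ 5 ∈ M := by
      have : yv ζ 5 = yv ζ 1 ^ 3 * yv ζ 5 / yv ζ 1 ^ 3 := by field_simp
      rw [this]
      exact div_mem p1 (pow_mem hY _)
    have hNM := mul_mem hY hY5
    have nN := mul_ne_zero n1 n5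
    exact lt8 (hM 4) hY (mem_of_div K (pow_ne_zero _ nN) (hM 7) (pow_mem hNM _))
      (mem_of_div K (pow_ne_zero _ n1) p2 (pow_mem hY _))
      (mem_of_div K (pow_ne_zero _ nN) (hM 6) (pow_mem hNM _)) hY5
      (mem_of_div K (pow_ne_zero _ nN) (hM 5) (pow_mem hNM _))
      (mem_of_div K (pow_ne_zero _ n5) q2 (pow_mem hY5 _))

include hζ in
lemma case7 [FiniteDimensional K L] [IsGalois K L]
    (hL : IntermediateField.adjoin K {ζ} = ⊤) (τ : L ≃ₐ[K] L) (hτ : τ ζ = ζ ^ 7)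
    (hG : ∀ τ' : L ≃ₐ[K] L, τ' = 1 ∨ τ' = τ) :
    IsRatExt K ↥(fixedSub K (Fin 8) (Subgroup.zpowers (finRotate 8))) := by
  have hA : ∀ j, cAct K L τ (yv ζ j) = yv ζ (7 * j) := cAct_yv K τ 7 hτ
  have a0 : cAct K L τ (yv ζ 0) = yv ζ 0 := (hA 0).trans (yv_modn hζ 0 0)
  have a1 : cAct K L τ (yv ζ 1) = yv ζ 7 := (hA 1).trans (yv_modn hζ 7 0)
  have a2 : cAct K L τ (yv ζ 2) = yv ζ 6 := (hA 2).trans (yv_modn hζ 6 1)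
  have a3 : cAct K L τ (yv ζ 3) = yv ζ 5 := (hA 3).trans (yv_modn hζ 5 2)
  have a4 : cAct K L τ (yv ζ 4) = yv ζ 4 := (hA 4).trans (yv_modn hζ 4 3)
  have a5 : cAct K L τ (yv ζ 5) = yv ζ 3 := (hA 5).trans (yv_modn hζ 3 4)
  have a6 : cAct K L τ (yv ζ 6) = yv ζ 2 := (hA 6).trans (yv_modn hζ 2 5)
  have a7 : cAct K L τ (yv ζ 7) = yv ζ 1 := (hA 7).trans (yv_modn hζ 1 6)
  have hz1 : cAct K L τ (algebraMap L _ ζ) = algebraMap L _ (ζ ^ 7) := by rw [cAct_L, hτ]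
  have hz2 : cAct K L τ (algebraMap L _ (ζ ^ 7)) = algebraMap L _ ζ := by
    rw [cAct_L, map_pow, hτ, ← pow_mul]
    exact congrArg _ (by rw [pow_eq_pow_mod _ hζ.pow_eq_one]; simp)
  have hne : ζ ≠ ζ ^ 7 := fun h => by
    have := hζ.pow_inj (i := 1) (j := 7) (by norm_num) (by norm_num) (by rwa [pow_one])
    omega
  have n1 := yv_ne_zero (ζ := ζ) 1
  have n7 := yv_ne_zero (ζ := ζ) 7
  have P1 := pair_fix (cAct K L τ).toRingEquiv (yv ζ 2 / yv ζ 1 ^ 2) (yv ζ 6 / yv ζ 7 ^ 2) _ _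
    (by change cAct K L τ _ = _; rw [map_div₀, map_pow, a1, a2])
    (by change cAct K L τ _ = _; rw [map_div₀, map_pow, a7, a6]) hz1 hz2
  have P2 := pair_fix (cAct K L τ).toRingEquiv (yv ζ 3 / yv ζ 1 ^ 3) (yv ζ 5 / yv ζ 7 ^ 3) _ _
    (by change cAct K L τ _ = _; rw [map_div₀, map_pow, a1, a3])
    (by change cAct K L τ _ = _; rw [map_div₀, map_pow, a5, a7]) hz1 hz2
  have s1 : sg L (yv ζ 2 / yv ζ 1 ^ 2) = yv ζ 2 / yv ζ 1 ^ 2 :=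
    ((Wt.y hζ 2).div hζ ((Wt.y hζ 1).pow 2)).fix hζ (by norm_num)
  have s2 : sg L (yv ζ 6 / yv ζ 7 ^ 2) = yv ζ 6 / yv ζ 7 ^ 2 :=
    ((Wt.y hζ 6).div hζ ((Wt.y hζ 7).pow 2)).fix hζ (by norm_num)
  have s3 : sg L (yv ζ 3 / yv ζ 1 ^ 3) = yv ζ 3 / yv ζ 1 ^ 3 :=
    ((Wt.y hζ 3).div hζ ((Wt.y hζ 1).pow 3)).fix hζ (by norm_num)
  have s4 : sg L (yv ζ 5 / yv ζ 7 ^ 3) = yv ζ 5 / yv ζ 7 ^ 3 :=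
    ((Wt.y hζ 5).div hζ ((Wt.y hζ 7).pow 3)).fix hζ (by norm_num)
  have sa : ∀ {x y : RFF L (Fin 8)}, sg L x = x → sg L y = y → sg L (x + y) = x + y :=
    fun hx hy => by rw [map_add, hx, hy]
  have sb : ∀ {x y : RFF L (Fin 8)} (c d : L), sg L x = x → sg L y = y →
      sg L (algebraMap L _ c * x + algebraMap L _ d * y) = algebraMap L _ c * x + algebraMap L _ d * y :=
    fun c d hx hy => by rw [map_add, map_mul, map_mul, AlgEquiv.commutes, AlgEquiv.commutes, hx, hy]
  have hS := y17_ne hζ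
  have hδ : (algebraMap L (RFF L (Fin 8)) ζ - algebraMap L _ (ζ ^ 7)) ≠ 0 := by
    rw [← map_sub]; exact (map_ne_zero _).2 (sub_ne_zero.2 hne)
  have h2 : (2 : RFF L (Fin 8)) ≠ 0 := by
    rw [← map_ofNat (algebraMap L (RFF L (Fin 8))) 2]; exact (map_ne_zero _).2 (two_ne_of_prim hζ)
  have z4 : algebraMap L (RFF L (Fin 8)) ζ ^ 4 = -1 := by
    rw [← map_pow, zeta4 hζ, map_neg, map_one]
  have g1 : sg L (yv ζ 1 ^ 4) = - yv ζ 1 ^ 4 := by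
    have := (Wt.y hζ 1).pow 4
    unfold Wt at this
    rw [this, z4]; ring
  have g7 : sg L (yv ζ 7 ^ 4) = - yv ζ 7 ^ 4 := by
    have := (Wt.y hζ 7).pow 4
    unfold Wt at this
    rw [this, mul_comm 7 4, pow_mul, z4]; ring
  have g4 : sg L (yv ζ 4) = - yv ζ 4 := by
    rw [sg_yv hζ, z4]; ring
  have hS' : - yv ζ 1 ^ 4 + - yv ζ 7 ^ 4 ≠ 0 := by
    intro h; apply hS; linear_combination -h
  have hS'' : yv ζ 7 ^ 4 + yv ζ 1 ^ 4 ≠ 0 := by rwa [add_comm]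
  refine core2 K hζ hL τ hG ![yv ζ 2 / yv ζ 1 ^ 2 + yv ζ 6 / yv ζ 7 ^ 2,
    algebraMap L _ ζ * (yv ζ 2 / yv ζ 1 ^ 2) + algebraMap L _ (ζ ^ 7) * (yv ζ 6 / yv ζ 7 ^ 2),
    yv ζ 3 / yv ζ 1 ^ 3 + yv ζ 5 / yv ζ 7 ^ 3,
    algebraMap L _ ζ * (yv ζ 3 / yv ζ 1 ^ 3) + algebraMap L _ (ζ ^ 7) * (yv ζ 5 / yv ζ 7 ^ 3),
    yv ζ 0, yv ζ 1 * yv ζ 7, yv ζ 4 / (yv ζ 1 ^ 4 + yv ζ 7 ^ 4), (yv ζ 1 ^ 4 - yv ζ 7 ^ 4) / ((algebraMap L (RFF L (Fin 8)) ζ - algebraMap L _ (ζ ^ 7)) * (yv ζ 1 ^ 4 + yv ζ 7 ^ 4))] ?_ ?_ ?_ ?_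
  · refine vec8 (P := fun f => sg L f = f) (sa s1 s2) (sb _ _ s1 s2) (sa s3 s4) (sb _ _ s3 s4)
      ((Wt.y hζ 0).fix hζ (by norm_num))
      (((Wt.y hζ 1).mul (Wt.y hζ 7)).fix hζ (by norm_num)) ?_ ?_
    · rw [map_div₀, map_add, g1, g7, g4, div_eq_div_iff hS' hS]; ring
    · rw [map_div₀, map_mul, map_sub, map_add, g1, g7, map_sub, AlgEquiv.commutes, AlgEquiv.commutes,
        div_eq_div_iff (mul_ne_zero hδ hS') (mul_ne_zero hδ hS)]
      ring
  · refine vec8 (P := fun f => cAct K L τ f = f) P1.1 P1.2 P2.1 P2.2 a0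
      (by rw [map_mul, a1, a7, mul_comm]) ?_ ?_
    · rw [map_div₀, map_add, map_pow, map_pow, a1, a7, a4, add_comm]
    · have hδ' : algebraMap L (RFF L (Fin 8)) (ζ ^ 7) - algebraMap L _ ζ ≠ 0 := by
        intro h; apply hδ; linear_combination -h
      rw [map_div₀, map_mul, map_sub, map_sub, map_add, map_pow, map_pow, a1, a7, hz1, hz2,
        div_eq_div_iff (mul_ne_zero hδ' hS'') (mul_ne_zero hδ hS)]
      ring
  · intro M hM hLM
    have hs7 := hM 7
    change (yv ζ 1 ^ 4 - yv ζ 7 ^ 4) / ((algebraMap L (RFF L (Fin 8)) ζ - algebraMap L _ (ζ ^ 7)) * (yv ζ 1 ^ 4 + yv ζ 7 ^ 4)) ∈ M at hs7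
    have e1 : 1 + (algebraMap L (RFF L (Fin 8)) ζ - algebraMap L _ (ζ ^ 7)) * ((yv ζ 1 ^ 4 - yv ζ 7 ^ 4) / ((algebraMap L (RFF L (Fin 8)) ζ - algebraMap L _ (ζ ^ 7)) * (yv ζ 1 ^ 4 + yv ζ 7 ^ 4))) = 2 * yv ζ 1 ^ 4 / (yv ζ 1 ^ 4 + yv ζ 7 ^ 4) := by
      field_simp; ring
    have e2 : 1 - (algebraMap L (RFF L (Fin 8)) ζ - algebraMap L _ (ζ ^ 7)) * ((yv ζ 1 ^ 4 - yv ζ 7 ^ 4) / ((algebraMap L (RFF L (Fin 8)) ζ - algebraMap L _ (ζ ^ 7)) * (yv ζ 1 ^ 4 + yv ζ 7 ^ 4))) = 2 * yv ζ 7 ^ 4 / (yv ζ 1 ^ 4 + yv ζ 7 ^ 4) := by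
      field_simp; ring
    have : yv ζ 1 ^ 8 = (1 + (algebraMap L (RFF L (Fin 8)) ζ - algebraMap L _ (ζ ^ 7)) * ((yv ζ 1 ^ 4 - yv ζ 7 ^ 4) / ((algebraMap L (RFF L (Fin 8)) ζ - algebraMap L _ (ζ ^ 7)) * (yv ζ 1 ^ 4 + yv ζ 7 ^ 4)))) / (1 - (algebraMap L (RFF L (Fin 8)) ζ - algebraMap L _ (ζ ^ 7)) * ((yv ζ 1 ^ 4 - yv ζ 7 ^ 4) / ((algebraMap L (RFF L (Fin 8)) ζ - algebraMap L _ (ζ ^ 7)) * (yv ζ 1 ^ 4 + yv ζ 7 ^ 4)))) * (yv ζ 1 * yv ζ 7) ^ 4 := by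
      rw [e1, e2]
      field_simp
    rw [this]
    have hδM : (algebraMap L (RFF L (Fin 8)) ζ - algebraMap L _ (ζ ^ 7)) ∈ M := sub_mem (hLM _) (hLM _)
    exact mul_mem (div_mem (add_mem (one_mem _) (mul_mem hδM hs7)) (sub_mem (one_mem _) (mul_mem hδM hs7)))
      (pow_mem (hM 5) _)
  · intro M hM hLM hY
    obtain ⟨p1, q1⟩ := pair_mem K M hLM ζ (ζ ^ 7) hne _ _ (hM 0) (hM 1)
    obtain ⟨p2, q2⟩ := pair_mem K M hLM ζ (ζ ^ 7) hne _ _ (hM 2) (hM 3)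
    have hY7 : yv ζ 7 ∈ M := by
      have : yv ζ 7 = yv ζ 1 * yv ζ 7 / yv ζ 1 := by field_simp
      rw [this]
      exact div_mem (hM 5) hY
    exact lt8 (hM 4) hY (mem_of_div K (pow_ne_zero _ n1) p1 (pow_mem hY _))
      (mem_of_div K (pow_ne_zero _ n1) p2 (pow_mem hY _))
      (mem_of_div K hS (hM 6) (add_mem (pow_mem hY _) (pow_mem hY7 _)))
      (mem_of_div K (pow_ne_zero _ n7) q2 (pow_mem hY7 _))
      (mem_of_div K (pow_ne_zero _ n7) q1 (pow_mem hY7 _)) hY7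

end Cases2

section Gal

variable {K L : Type} [Field K] [Field L] [Algebra K L] {ζ : L} (hζ : IsPrimitiveRoot ζ 8)

include hζ in
lemma gal_pow (τ : L ≃ₐ[K] L) : τ ζ = ζ ^ 1 ∨ τ ζ = ζ ^ 3 ∨ τ ζ = ζ ^ 5 ∨ τ ζ = ζ ^ 7 := by
  have h1 : IsPrimitiveRoot (τ ζ) 8 := hζ.map_of_injective τ.injective
  obtain ⟨i, hi, hi'⟩ := hζ.eq_pow_of_pow_eq_one h1.pow_eq_one
  rw [← hi'] at h1
  have h2 := (hζ.pow_iff_coprime (by norm_num) i).1 h1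
  rw [← hi']
  interval_cases i
  · norm_num at h2
  · simp
  · norm_num at h2
  · simp
  · norm_num at h2
  · simp
  · norm_num at h2
  · simp

lemma gal_ext (hL : IntermediateField.adjoin K {ζ} = ⊤) (τ τ' : L ≃ₐ[K] L) (h : τ ζ = τ' ζ) :
    τ = τ' := by
  ext a
  have ha : a ∈ IntermediateField.adjoin K {ζ} := by rw [hL]; trivial
  induction ha using IntermediateField.adjoin_induction with
  | mem x hx => rw [Set.mem_singleton_iff.1 hx]; exact h
  | algebraMap x => simp
  | add x y _ _ hx hy => rw [map_add, map_add, hx, hy]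
  | inv x _ hx => rw [map_inv₀, map_inv₀, hx]
  | mul x y _ _ hx hy => rw [map_mul, map_mul, hx, hy]

include hζ in
lemma gal_mul (τ τ' : L ≃ₐ[K] L) (k k' m : ℕ) (h : τ ζ = ζ ^ k) (h' : τ' ζ = ζ ^ k')
    (hm : k * k' % 8 = m) : (τ * τ') ζ = ζ ^ m := by
  rw [AlgEquiv.mul_apply, h', map_pow, h, ← pow_mul, pow_eq_pow_mod _ hζ.pow_eq_one, hm]

include hζ in
lemma gal_sq (hL : IntermediateField.adjoin K {ζ} = ⊤) (τ : L ≃ₐ[K] L) : τ * τ = 1 := by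
  apply gal_ext hL
  have h1 : (1 : L ≃ₐ[K] L) ζ = ζ ^ 1 := by simp
  rw [h1]
  rcases gal_pow hζ τ with h | h | h | h <;> exact gal_mul hζ τ τ _ _ 1 h h (by norm_num)

include hζ in
lemma cyclic_of_two (g : L ≃ₐ[K] L) (hG : ∀ τ : L ≃ₐ[K] L, τ = 1 ∨ τ = g) :
    IsCyclic (L ≃ₐ[K] L) := by
  refine ⟨g, fun τ => ?_⟩
  rcases hG τ with rfl | rfl
  · exact Subgroup.one_mem (Subgroup.zpowers g)
  · exact Subgroup.mem_zpowers _

include hζ in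
lemma two_of_cyclic (hL : IntermediateField.adjoin K {ζ} = ⊤) (hc : IsCyclic (L ≃ₐ[K] L)) :
    ∃ g : L ≃ₐ[K] L, ∀ τ : L ≃ₐ[K] L, τ = 1 ∨ τ = g := by
  obtain ⟨g, hg⟩ := hc
  refine ⟨g, fun τ => ?_⟩
  obtain ⟨n, rfl⟩ := hg τ
  have h2 : g ^ (2 : ℤ) = 1 := by
    rw [zpow_ofNat, pow_two]; exact gal_sq hζ hL g
  rcases Int.even_or_odd' n with ⟨m, rfl | rfl⟩
  · left
    change g ^ (2 * m) = 1
    rw [zpow_mul, h2, one_zpow]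
  · right
    change g ^ (2 * m + 1) = g
    rw [zpow_add, zpow_mul, h2, one_zpow, one_mul, zpow_one]

include hζ in
lemma noncyclic (hL : IntermediateField.adjoin K {ζ} = ⊤) (hc : ¬ IsCyclic (L ≃ₐ[K] L)) :
    (∃ τ : L ≃ₐ[K] L, τ ζ = ζ ^ 3) ∧ (∃ τ : L ≃ₐ[K] L, τ ζ = ζ ^ 7) := by
  have key : ∀ k k', (∀ τ : L ≃ₐ[K] L, τ ζ = ζ ^ 1 ∨ τ ζ = ζ ^ k ∨ τ ζ = ζ ^ k') →
      (∃ τ : L ≃ₐ[K] L, τ ζ = ζ ^ k) ∧ (∃ τ : L ≃ₐ[K] L, τ ζ = ζ ^ k') := by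
    have key0 : ∀ k k', (∀ τ : L ≃ₐ[K] L, τ ζ = ζ ^ 1 ∨ τ ζ = ζ ^ k ∨ τ ζ = ζ ^ k') →
        (∃ τ : L ≃ₐ[K] L, τ ζ = ζ ^ k) := by
      intro k k' h
      by_contra hn
      push Not at hn
      apply hc
      have h' : ∀ τ : L ≃ₐ[K] L, τ = 1 ∨ τ ζ = ζ ^ k' := by
        intro τ
        rcases h τ with h1 | h1 | h1
        · left; apply gal_ext hL; simpa using h1
        · exact absurd h1 (hn τ)
        · right; exact h1
      by_cases hg : ∃ g : L ≃ₐ[K] L, g ζ = ζ ^ k'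
      · obtain ⟨g, hg⟩ := hg
        apply cyclic_of_two hζ g
        intro τ
        rcases h' τ with h1 | h1
        · left; exact h1
        · right; apply gal_ext hL; rw [h1, hg]
      · apply cyclic_of_two hζ 1
        intro τ
        rcases h' τ with h1 | h1
        · left; exact h1
        · exact absurd ⟨τ, h1⟩ hg
    intro k k' h
    refine ⟨key0 k k' h, key0 k' k fun τ => ?_⟩
    rcases h τ with h | h | h <;> simp [h]
  constructor
  · by_contra hn
    push Not at hn
    obtain ⟨⟨a, ha⟩, ⟨b, hb⟩⟩ := key 5 7 (fun τ => by
      rcases gal_pow hζ τ with h | h | h | h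
      · exact Or.inl h
      · exact absurd h (hn τ)
      · exact Or.inr (Or.inl h)
      · exact Or.inr (Or.inr h))
    exact hn (a * b) (gal_mul hζ a b 5 7 3 ha hb (by norm_num))
  · by_contra hn
    push Not at hn
    obtain ⟨⟨a, ha⟩, ⟨b, hb⟩⟩ := key 3 5 (fun τ => by
      rcases gal_pow hζ τ with h | h | h | h
      · exact Or.inl h
      · exact Or.inr (Or.inl h)
      · exact Or.inr (Or.inr h)
      · exact absurd h (hn τ))
    exact hn (a * b) (gal_mul hζ a b 3 5 7 ha hb (by norm_num))

include hζ in
lemma rat_of_cyclic [FiniteDimensional K L] [IsGalois K L]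
    (hL : IntermediateField.adjoin K {ζ} = ⊤) (hc : IsCyclic (L ≃ₐ[K] L)) :
    IsRatExt K ↥(fixedSub K (Fin 8) (Subgroup.zpowers (finRotate 8))) := by
  obtain ⟨g, hg⟩ := two_of_cyclic hζ hL hc
  rcases gal_pow hζ g with h | h | h | h
  · have hg1 : g = 1 := by apply gal_ext hL; simpa using h
    refine case1 hζ K hL fun τ => ?_
    rcases hg τ with h' | h'
    · exact h'
    · rw [h', hg1]
  · exact case3 hζ K hL g h hg
  · exact case5 hζ K hL g h hg
  · exact case7 hζ K hL g h hg

end Gal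

section NonRat

lemma assoc_of_frac {S : Type} [CommRing S] [IsDomain S] [UniqueFactorizationMonoid S]
    (A : S ≃+* S) (n d : S) (hrel : IsRelPrime n d) (u : S) (hu : IsUnit u)
    (h : A n * d = u * n * A d) : Associated (A d) d := by
  have hrelA : IsRelPrime (A n) (A d) := by
    intro p h1 h2
    have h1' : A.symm p ∣ n := by
      have := map_dvd A.symm h1
      rwa [A.symm_apply_apply] at this
    have h2' : A.symm p ∣ d := by
      have := map_dvd A.symm h2
      rwa [A.symm_apply_apply] at this
    have := (hrel h1' h2').map A
    rwa [A.apply_symm_apply] at this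
  apply associated_of_dvd_dvd
  · have : A d ∣ A n * d := ⟨u * n, by rw [h]; ring⟩
    exact hrelA.symm.dvd_of_dvd_mul_left this
  · have h1 : d ∣ n * (u * A d) := ⟨A n, by rw [mul_comm d, h]; ring⟩
    have h2 := hrel.symm.dvd_of_dvd_mul_left h1
    exact (hu.dvd_mul_left).1 h2

variable {K L : Type} [Field K] [Field L] [Algebra K L] {ζ : L} (hζ : IsPrimitiveRoot ζ 8)

lemma unit_C {σ : Type} {p : MvPolynomial σ L} (h : IsUnit p) : ∃ a : L, a ≠ 0 ∧ p = MvPolynomial.C a := by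
  obtain ⟨r, hr, rfl⟩ := MvPolynomial.isUnit_iff_eq_C_of_isReduced.1 h
  exact ⟨r, hr.ne_zero, rfl⟩

lemma const_of_sq (c : RFF L (Fin 8)) (a : L) (ha : a ≠ 0) (h : c ^ 2 = algebraMap L _ a) :
    ∃ b : L, b ≠ 0 ∧ c = algebraMap L _ b := by
  have hintg : IsIntegral (MvPolynomial (Fin 8) L) c := by
    apply IsIntegral.of_pow (n := 2) (by norm_num)
    rw [h, IsScalarTower.algebraMap_apply L (MvPolynomial (Fin 8) L) (RFF L (Fin 8))]
    exact isIntegral_algebraMap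
  obtain ⟨p, rfl⟩ := IsIntegrallyClosed.isIntegral_iff.1 hintg
  have hp : p ^ 2 = MvPolynomial.C a := by
    apply IsFractionRing.injective (MvPolynomial (Fin 8) L) (RFF L (Fin 8))
    rw [map_pow, h, IsScalarTower.algebraMap_apply L (MvPolynomial (Fin 8) L) (RFF L (Fin 8))]
    rfl
  have hu : IsUnit p := by
    have : IsUnit (p ^ 2) := by
      rw [hp]; exact (IsUnit.mk0 a ha).map MvPolynomial.C
    exact (isUnit_pow_iff (by norm_num)).1 this
  obtain ⟨b, hb, rfl⟩ := unit_C hu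
  refine ⟨b, hb, ?_⟩
  rw [IsScalarTower.algebraMap_apply L (MvPolynomial (Fin 8) L) (RFF L (Fin 8))]
  rfl

include hζ in
lemma no_frac (τ3 τ7 : L ≃ₐ[K] L) (h3 : τ3 ζ = ζ ^ 3) (h7 : τ7 ζ = ζ ^ 7) (w : RFF L (Fin 8)) (hw : w ≠ 0)
    (hsg : sg L w = - w) (c v : L) (hc : c ≠ 0) (hv : v ≠ 0)
    (hc3 : w * cAct K L τ3 w = algebraMap L _ c) (hv7 : cAct K L τ7 w = algebraMap L _ v * w) : False := by
  obtain ⟨n, ⟨d, hd⟩, hrel, hnd⟩ := IsFractionRing.exists_reduced_fraction (A := MvPolynomial (Fin 8) L) w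
  simp only at hrel
  have hd0 : d ≠ 0 := nonZeroDivisors.ne_zero hd
  have hinj := IsFractionRing.injective (MvPolynomial (Fin 8) L) (RFF L (Fin 8))
  set j := algebraMap (MvPolynomial (Fin 8) L) (RFF L (Fin 8)) with hj
  have hjC : ∀ a : L, algebraMap L (RFF L (Fin 8)) a = j (MvPolynomial.C a) := fun a =>
    IsScalarTower.algebraMap_apply L (MvPolynomial (Fin 8) L) (RFF L (Fin 8)) a
  have hne : ∀ p, p ≠ 0 → j p ≠ 0 := fun p hp h => hp (hinj (by rw [h, map_zero]))
  have hwnd : w * j d = j n := by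
    rw [← hnd]; exact IsLocalization.mk'_spec _ _ _
  let e3 : MvPolynomial (Fin 8) L ≃+* MvPolynomial (Fin 8) L := MvPolynomial.mapEquiv _ (τ3 : L ≃+* L)
  let e7 : MvPolynomial (Fin 8) L ≃+* MvPolynomial (Fin 8) L := MvPolynomial.mapEquiv _ (τ7 : L ≃+* L)
  let es : MvPolynomial (Fin 8) L ≃+* MvPolynomial (Fin 8) L :=
    (MvPolynomial.renameEquiv L (finRotate 8)).toRingEquiv
  have E3 : ∀ p, cAct K L τ3 (j p) = j (e3 p) := fun p => cAct_algebraMap K L τ3 p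
  have E7 : ∀ p, cAct K L τ7 (j p) = j (e7 p) := fun p => cAct_algebraMap K L τ7 p
  have Es : ∀ p, sg L (j p) = j (es p) := fun p => permHom_algebraMap L (Fin 8) _ p
  have uC : ∀ a : L, a ≠ 0 → IsUnit (MvPolynomial.C (σ := Fin 8) a) := fun a ha =>
    (IsUnit.mk0 a ha).map MvPolynomial.C
  have w3 : cAct K L τ3 w * j (e3 d) = j (e3 n) := by rw [← E3, ← E3, ← map_mul, hwnd]
  have hs1 : es n * d = MvPolynomial.C (-1) * n * es d := by
    apply hinj
    rw [map_mul, map_mul, map_mul, ← Es, ← Es, ← hwnd, map_mul, hsg, ← hjC, map_neg, map_one]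
    ring
  have h71 : e7 n * d = MvPolynomial.C v * n * e7 d := by
    apply hinj
    rw [map_mul, map_mul, map_mul, ← E7, ← E7, ← hwnd, map_mul, hv7, ← hjC]
    ring
  obtain ⟨u', hu'⟩ := (assoc_of_frac es n d hrel _ (uC _ (by simp)) hs1).symm
  obtain ⟨v', hv'⟩ := (assoc_of_frac e7 n d hrel _ (uC _ hv) h71).symm
  obtain ⟨u, hu0, hu⟩ := unit_C u'.isUnit
  obtain ⟨b, hb0, hb⟩ := unit_C v'.isUnit
  rw [hu] at hu'
  rw [hb] at hv'
  have h31 : n * e3 n = MvPolynomial.C c * d * e3 d := by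
    apply hinj
    rw [map_mul, map_mul, map_mul, ← w3, ← hwnd, ← hjC, ← hc3]
    ring
  have hrel3 : IsRelPrime (e3 n) (e3 d) := by
    intro p h1 h2
    have h1' : e3.symm p ∣ n := by
      have := map_dvd e3.symm h1
      rwa [e3.symm_apply_apply] at this
    have h2' : e3.symm p ∣ d := by
      have := map_dvd e3.symm h2
      rwa [e3.symm_apply_apply] at this
    have := (hrel h1' h2').map e3
    rwa [e3.apply_symm_apply] at this
  have hassoc : Associated (e3 d) n := by
    apply associated_of_dvd_dvd
    · have : e3 d ∣ e3 n * n := ⟨MvPolynomial.C c * d, by rw [mul_comm, h31]; ring⟩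
      exact hrel3.symm.dvd_of_dvd_mul_left this
    · have h1 : n ∣ d * (MvPolynomial.C c * e3 d) := ⟨e3 n, by rw [h31]; ring⟩
      exact ((uC c hc).dvd_mul_left).1 (hrel.dvd_of_dvd_mul_left h1)
  obtain ⟨e', he'⟩ := hassoc
  obtain ⟨e, he0, he⟩ := unit_C e'.isUnit
  rw [he] at he'
  have hes3 : ∀ p, es (e3 p) = e3 (es p) := fun p => (MvPolynomial.map_rename _ _ p).symm
  have hes7 : ∀ p, es (e7 p) = e7 (es p) := fun p => (MvPolynomial.map_rename _ _ p).symm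
  have hesC : ∀ a, es (MvPolynomial.C a) = MvPolynomial.C a := fun a => MvPolynomial.rename_C _ _
  have he3C : ∀ a, e3 (MvPolynomial.C a) = MvPolynomial.C (τ3 a) := fun a => MvPolynomial.map_C _ _
  have he7C : ∀ a, e7 (MvPolynomial.C a) = MvPolynomial.C (τ7 a) := fun a => MvPolynomial.map_C _ _
  have h3d0 : e3 d ≠ 0 := by simpa using hd0
  have hu3 : τ3 u = - u := by
    have h1 := hs1
    rw [← he', map_mul, hes3, hesC, ← hu', map_mul, he3C] at h1
    have h2 : (d * e3 d * MvPolynomial.C e) * MvPolynomial.C (τ3 u) =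
        (d * e3 d * MvPolynomial.C e) * MvPolynomial.C (-u) := by
      rw [MvPolynomial.C_neg] at h1 ⊢
      rw [MvPolynomial.C_1] at h1
      linear_combination h1
    have h3 := mul_left_cancel₀ (mul_ne_zero (mul_ne_zero hd0 h3d0) (uC e he0).ne_zero) h2
    exact MvPolynomial.C_injective _ _ h3
  have hu7 : τ7 u = u := by
    have h1 := hes7 d
    rw [← hu', ← hv', map_mul, map_mul, hesC, he7C, ← hu', ← hv'] at h1
    have h2 : (d * MvPolynomial.C b) * MvPolynomial.C (τ7 u) =
        (d * MvPolynomial.C b) * MvPolynomial.C u := by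
      linear_combination -h1
    exact MvPolynomial.C_injective _ _ (mul_left_cancel₀ (mul_ne_zero hd0 (uC b hb0).ne_zero) h2)
  have hu8 : u ^ 8 = 1 := by
    have h1 : ∀ k : ℕ, (sg L)^[k] (j d) = j (d * MvPolynomial.C (u ^ k)) := by
      intro k
      induction k with
      | zero => simp
      | succ k ih =>
        rw [Function.iterate_succ_apply', ih, Es, map_mul, hesC, ← hu', pow_succ, MvPolynomial.C_mul]
        ring_nf
    have h2 := h1 8
    rw [sg_iter L] at h2
    have h3 := hinj h2
    have h4 : d * MvPolynomial.C 1 = d * MvPolynomial.C (u ^ 8) := by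
      rw [← h3, MvPolynomial.C_1, mul_one]
    exact (MvPolynomial.C_injective _ _ (mul_left_cancel₀ hd0 h4)).symm
  obtain ⟨i, hi, rfl⟩ := hζ.eq_pow_of_pow_eq_one hu8
  have h2 := two_ne_of_prim hζ
  have hz0 : ζ ≠ 0 := hζ.ne_zero (by norm_num)
  have h6 : ζ ^ (6 * i) = 1 := by
    rw [map_pow, h7, ← pow_mul] at hu7
    have : ζ ^ (6 * i) * ζ ^ i = 1 * ζ ^ i := by
      rw [← pow_add, one_mul, ← hu7]; congr 1; ring
    exact mul_right_cancel₀ (pow_ne_zero _ hz0) this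
  rw [hζ.pow_eq_one_iff_dvd] at h6
  have h22 : ζ ^ (2 * i) = 1 := by
    rw [hζ.pow_eq_one_iff_dvd]; omega
  rw [map_pow, h3, ← pow_mul] at hu3
  have h5 : ζ ^ (3 * i) = ζ ^ i := by
    have : 3 * i = 2 * i + i := by ring
    rw [this, pow_add, h22, one_mul]
  rw [h5] at hu3
  have h10 : 2 * ζ ^ i = 0 := by linear_combination hu3
  exact (mul_ne_zero h2 (pow_ne_zero _ hz0)) h10

end NonRat

section NonRat2

variable {K L : Type} [Field K] [Field L] [Algebra K L] {ζ : L} (hζ : IsPrimitiveRoot ζ 8)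

lemma cAct_mul (τ τ' : L ≃ₐ[K] L) (f : RFF L (Fin 8)) :
    cAct K L (τ * τ') f = cAct K L τ (cAct K L τ' f) := by
  obtain ⟨a, b, -, rfl⟩ := IsFractionRing.div_surjective (MvPolynomial (Fin 8) L) f
  simp only [map_div₀, cAct_algebraMap, MvPolynomial.map_map]
  rfl

include hζ in
lemma trace_formula [FiniteDimensional K L] (hL : IntermediateField.adjoin K {ζ} = ⊤)
    (f : RFF L (Fin 8)) :
    8 * f = ∑ j ∈ Finset.range 8, algebraMap L _ (ζ ^ j) *
      ∑ τ : L ≃ₐ[K] L, cAct K L τ (algebraMap L _ (ζ ^ (7 * j)) * f) := by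
  classical
  simp only [Finset.mul_sum]
  rw [Finset.sum_comm]
  have key : ∀ τ : L ≃ₐ[K] L, ∑ j ∈ Finset.range 8, algebraMap L (RFF L (Fin 8)) (ζ ^ j) *
      cAct K L τ (algebraMap L _ (ζ ^ (7 * j)) * f) = if τ = 1 then 8 * f else 0 := by
    intro τ
    have h1 : ∀ k, τ ζ = ζ ^ k → ∑ j ∈ Finset.range 8, algebraMap L (RFF L (Fin 8)) (ζ ^ j) *
      cAct K L τ (algebraMap L _ (ζ ^ (7 * j)) * f) =
        algebraMap L (RFF L (Fin 8)) (if 8 ∣ 1 + 7 * k then 8 else 0) * cAct K L τ f := by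
      intro k hk
      rw [← geom8 hζ, map_sum, Finset.sum_mul]
      refine Finset.sum_congr rfl fun j _ => ?_
      rw [map_mul, cAct_L, map_pow τ, hk, ← mul_assoc, ← map_mul, ← pow_mul, ← pow_add]
      congr 3
      ring
    have h11 : (1 : L ≃ₐ[K] L) ζ = ζ ^ 1 := by simp
    split_ifs with h
    · subst h
      rw [h1 1 h11, cAct_one, if_pos (by norm_num), map_ofNat (algebraMap L (RFF L (Fin 8))) 8]
    · rcases gal_pow hζ τ with h' | h' | h' | h'
      · exact absurd (gal_ext hL _ _ (h'.trans h11.symm)) h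
      all_goals
        rw [h1 _ h']
        norm_num
  simp only [key]
  simp

include hζ in
lemma rat_setup [FiniteDimensional K L] [IsGalois K L] (hL : IntermediateField.adjoin K {ζ} = ⊤)
    (h : IsRatExt K ↥(fixedSub K (Fin 8) (Subgroup.zpowers (finRotate 8)))) :
    ∃ (n : ℕ) (t : Fin n → RFF L (Fin 8)), AlgebraicIndependent L t ∧
      (∀ i (τ : L ≃ₐ[K] L), cAct K L τ (t i) = t i) ∧ (∀ i, sg L (t i) = t i) ∧
      ∀ f, sg L f = f → ∃ r d : MvPolynomial (Fin n) L, d ≠ 0 ∧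
        f * MvPolynomial.aeval t d = MvPolynomial.aeval t r := by
  obtain ⟨n, t, hind, htop⟩ := h
  let F := fixedSub K (Fin 8) (Subgroup.zpowers (finRotate 8))
  let ψ : F →ₐ[K] RFF L (Fin 8) := (iota K L).comp F.val
  have hind2 : AlgebraicIndependent L (ψ ∘ t) :=
    (hind.map' (f := ψ) ψ.injective).extendScalars L
  refine ⟨n, ψ ∘ t, hind2, fun i τ => cAct_iota K L τ _, fun i => ?_, fun f hf => ?_⟩
  · change sg L (iota K L _) = iota K L _
    rw [← iota_sg]
    exact congrArg _ ((mem_fixedSub_iff K _).1 (t i).2)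
  · have hF : ∀ g, sg L g = g → (∀ τ : L ≃ₐ[K] L, cAct K L τ g = g) →
        g ∈ IntermediateField.adjoin L (Set.range (ψ ∘ t)) := by
      intro g hg hc
      obtain ⟨g', rfl⟩ := descent K L g hc
      have hg' : g' ∈ F := by
        rw [mem_fixedSub_iff]
        apply (iota K L).injective
        change iota K L _ = iota K L _
        rw [iota_sg, hg]
      have h1 : (⟨g', hg'⟩ : F) ∈ IntermediateField.adjoin K (Set.range t) := by
        rw [htop]; trivial
      have h2 : ψ ⟨g', hg'⟩ ∈ (IntermediateField.adjoin K (Set.range t)).map ψ := ⟨_, h1, rfl⟩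
      rw [IntermediateField.adjoin_map, ← Set.range_comp] at h2
      have h3 : IntermediateField.adjoin K (Set.range (ψ ∘ t)) ≤
          (IntermediateField.adjoin L (Set.range (ψ ∘ t))).restrictScalars K := by
        rw [IntermediateField.adjoin_le_iff]
        exact IntermediateField.subset_adjoin L _
      exact h3 h2
    have hmem : f ∈ IntermediateField.adjoin L (Set.range (ψ ∘ t)) := by
      have h8 : (8 : RFF L (Fin 8)) ≠ 0 := by
        have := (map_ne_zero (algebraMap L (RFF L (Fin 8)))).2 (eight_ne hζ)
        rwa [map_ofNat] at this
      have h9 : f = algebraMap L _ (8⁻¹ : L) * (8 * f) := by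
        rw [map_inv₀, map_ofNat, ← mul_assoc, inv_mul_cancel₀ h8, one_mul]
      rw [h9, trace_formula (K := K) hζ hL]
      refine mul_mem (IntermediateField.algebraMap_mem _ _) (sum_mem fun j _ => ?_)
      refine mul_mem (IntermediateField.algebraMap_mem _ _) (hF _ ?_ ?_)
      · rw [map_sum]
        refine Finset.sum_congr rfl fun τ _ => ?_
        rw [← cAct_sg, map_mul, hf, AlgEquiv.commutes]
      · intro τ
        rw [map_sum]
        refine Fintype.sum_equiv (Equiv.mulLeft τ) _ _ fun x => ?_
        exact (cAct_mul τ x _).symm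
    rw [IntermediateField.mem_adjoin_range_iff] at hmem
    obtain ⟨r, s, hrs⟩ := hmem
    by_cases hs : s = 0
    · refine ⟨0, 1, one_ne_zero, ?_⟩
      rw [hrs, hs]
      simp
    · refine ⟨r, s, hs, ?_⟩
      have : MvPolynomial.aeval (ψ ∘ t) s ≠ 0 := fun h0 => hs (hind2 (by rw [h0, map_zero]))
      rw [hrs, div_mul_cancel₀ _ this]

include hζ in
theorem not_rat [FiniteDimensional K L] [IsGalois K L] (hL : IntermediateField.adjoin K {ζ} = ⊤)
    (τ3 τ7 : L ≃ₐ[K] L) (h3 : τ3 ζ = ζ ^ 3) (h7 : τ7 ζ = ζ ^ 7)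
    (h : IsRatExt K ↥(fixedSub K (Fin 8) (Subgroup.zpowers (finRotate 8)))) : False := by
  obtain ⟨n, t, hind, hct, hst, hall⟩ := rat_setup hζ hL h
  let φ : MvPolynomial (Fin n) L →ₐ[L] RFF L (Fin 8) := MvPolynomial.aeval t
  have hφ : Function.Injective φ := hind
  have hall' : ∀ f, sg L f = f → ∃ r d, d ≠ 0 ∧ f * φ d = φ r := hall
  have hne : ∀ p, p ≠ 0 → φ p ≠ 0 := fun p hp h0 => hp (hφ (by rw [h0, map_zero]))
  have hφC : ∀ a, φ (MvPolynomial.C a) = algebraMap L _ a := fun a => MvPolynomial.aeval_C _ _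
  have hsφ : ∀ p, sg L (φ p) = φ p := by
    intro p
    induction p using MvPolynomial.induction_on with
    | C a => rw [hφC, AlgEquiv.commutes]
    | add p q hp hq => rw [map_add, map_add, hp, hq]
    | mul_X p i hp =>
      have : φ (MvPolynomial.X i) = t i := MvPolynomial.aeval_X _ _
      rw [map_mul, map_mul, hp, this, hst]
  let e : (L ≃ₐ[K] L) → (MvPolynomial (Fin n) L ≃+* MvPolynomial (Fin n) L) := fun τ =>
    MvPolynomial.mapEquiv _ (τ : L ≃+* L)
  have heφ : ∀ τ p, cAct K L τ (φ p) = φ (e τ p) := by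
    intro τ p
    induction p using MvPolynomial.induction_on with
    | C a =>
      have : e τ (MvPolynomial.C a) = MvPolynomial.C (τ a) := MvPolynomial.map_C _ _
      rw [this, hφC, hφC, cAct_L]
    | add p q hp hq => rw [map_add, map_add, map_add, map_add, hp, hq]
    | mul_X p i hp =>
      have h1 : φ (MvPolynomial.X i) = t i := MvPolynomial.aeval_X _ _
      have h2 : e τ (MvPolynomial.X i) = MvPolynomial.X i := MvPolynomial.map_X _ _
      rw [map_mul, map_mul, map_mul, map_mul, hp, h2, h1, hct]
  have y1 := yv_ne_zero (ζ := ζ) 1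
  have y3 := yv_ne_zero (ζ := ζ) 3
  have y7 := yv_ne_zero (ζ := ζ) 7
  have y4 := yv_ne_zero (ζ := ζ) 4
  obtain ⟨r, d, hd, hrd⟩ := hall' (yv ζ 1 ^ 8) (((Wt.y hζ 1).pow 8).fix hζ (by norm_num))
  obtain ⟨r3, d3, hd3, hrd3⟩ := hall' (yv ζ 3 / yv ζ 1 ^ 3)
    (((Wt.y hζ 3).div hζ ((Wt.y hζ 1).pow 3)).fix hζ (by norm_num))
  obtain ⟨r7, d7, hd7, hrd7⟩ := hall' (yv ζ 7 / yv ζ 1 ^ 7)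
    (((Wt.y hζ 7).div hζ ((Wt.y hζ 1).pow 7)).fix hζ (by norm_num))
  have hr : r ≠ 0 := by
    rintro rfl
    rw [map_zero] at hrd
    exact mul_ne_zero (pow_ne_zero _ y1) (hne d hd) hrd
  have hr3 : r3 ≠ 0 := by
    rintro rfl
    rw [map_zero] at hrd3
    exact mul_ne_zero (div_ne_zero y3 (pow_ne_zero _ y1)) (hne d3 hd3) hrd3
  have hr7 : r7 ≠ 0 := by
    rintro rfl
    rw [map_zero] at hrd7
    exact mul_ne_zero (div_ne_zero y7 (pow_ne_zero _ y1)) (hne d7 hd7) hrd7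
  have hφd := hne d hd
  have f3 : yv ζ 3 * φ d3 = φ r3 * yv ζ 1 ^ 3 := by
    rw [← hrd3]; field_simp
  have f7 : yv ζ 7 * φ d7 = φ r7 * yv ζ 1 ^ 7 := by
    rw [← hrd7]; field_simp
  set B := r * d ^ 7 with hB
  have hφB : φ B = yv ζ 1 ^ 8 * φ d ^ 8 := by
    rw [hB, map_mul, map_pow, ← hrd]; ring
  have hB0 : B ≠ 0 := mul_ne_zero hr (pow_ne_zero _ hd)
  have hede : ∀ τ, e τ d ≠ 0 := fun τ => by simpa using hd
  have hE3 : φ (e τ3 B) = yv ζ 3 ^ 8 * φ (e τ3 d) ^ 8 := by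
    rw [← heφ, hφB, map_mul, map_pow, map_pow, cAct_yv K τ3 3 h3, heφ]
  have hE7 : φ (e τ7 B) = yv ζ 7 ^ 8 * φ (e τ7 d) ^ 8 := by
    rw [← heφ, hφB, map_mul, map_pow, map_pow, cAct_yv K τ7 7 h7, heφ]
  have k3 : e τ3 B * (d ^ 3 * d3) ^ 8 = B ^ 3 * (r3 * e τ3 d) ^ 8 := by
    apply hφ
    have f3' : (yv ζ 3 * φ d3) ^ 8 = (φ r3 * yv ζ 1 ^ 3) ^ 8 := by rw [f3]
    simp only [map_mul, map_pow, hE3, hφB]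
    linear_combination (φ (e τ3 d) ^ 8 * φ d ^ 24) * f3'
  have k7 : e τ7 B * (d ^ 7 * d7) ^ 8 = B ^ 7 * (r7 * e τ7 d) ^ 8 := by
    apply hφ
    have f7' : (yv ζ 7 * φ d7) ^ 8 = (φ r7 * yv ζ 1 ^ 7) ^ 8 := by rw [f7]
    simp only [map_mul, map_pow, hE7, hφB]
    linear_combination (φ (e τ7 d) ^ 8 * φ d ^ 56) * f7'
  obtain ⟨w, q, hw, hq, ⟨a', ha'⟩, ⟨v', hv'⟩⟩ := ufd_key (e τ3) (e τ7) B _ _ _ _ hB0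
    (mul_ne_zero (pow_ne_zero 3 hd) hd3) (mul_ne_zero hr3 (hede τ3))
    (mul_ne_zero (pow_ne_zero 7 hd) hd7) (mul_ne_zero hr7 (hede τ7)) k3 k7
  obtain ⟨a, ha0, ha⟩ := unit_C a'.isUnit
  obtain ⟨v, hv0, hv⟩ := unit_C v'.isUnit
  rw [ha] at ha'
  rw [hv] at hv'
  have T34 : cAct K L τ3 (yv ζ 4) = yv ζ 4 := by
    rw [cAct_yv K τ3 3 h3]; exact yv_modn hζ 4 1
  have T74 : cAct K L τ7 (yv ζ 4) = yv ζ 4 := by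
    rw [cAct_yv K τ7 7 h7]; exact yv_modn hζ 4 3
  have A0 : ∀ x : L, x ≠ 0 → algebraMap L (RFF L (Fin 8)) x ≠ 0 := fun x hx => (map_ne_zero _).2 hx
  obtain ⟨W, hW⟩ : ∃ W, W = φ w := ⟨_, rfl⟩
  obtain ⟨Q, hQ⟩ : ∃ Q, Q = φ q * yv ζ 4 / (yv ζ 1 ^ 4 * φ d ^ 4) := ⟨_, rfl⟩
  have hW0 : W ≠ 0 := by rw [hW]; exact hne w hw
  have hQ0 : Q ≠ 0 := by
    rw [hQ]
    exact div_ne_zero (mul_ne_zero (hne q hq) y4) (mul_ne_zero (pow_ne_zero _ y1) (pow_ne_zero _ hφd))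
  have hT3W0 : cAct K L τ3 W ≠ 0 := (map_ne_zero _).2 hW0
  have main : yv ζ 4 ^ 2 = algebraMap L _ a * W * cAct K L τ3 W * Q ^ 2 := by
    have h1 := congrArg φ ha'
    rw [hφB, map_mul, map_mul, map_mul, map_pow, hφC, ← heφ, ← hW] at h1
    rw [hQ]
    field_simp
    linear_combination -h1
  have T33 : cAct K L τ3 (cAct K L τ3 W) = W := by
    rw [← cAct_mul, gal_sq hζ hL, cAct_one]
  have T7W : cAct K L τ7 W = algebraMap L _ v * W := by
    rw [hW, heφ, ← hv', map_mul, hφC, mul_comm]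
  have hcomm : τ7 * τ3 = τ3 * τ7 := by
    apply gal_ext hL
    rw [gal_mul hζ τ7 τ3 7 3 5 h7 h3 (by norm_num), gal_mul hζ τ3 τ7 3 7 5 h3 h7 (by norm_num)]
  have T73W : cAct K L τ7 (cAct K L τ3 W) = algebraMap L _ (τ3 v) * cAct K L τ3 W := by
    rw [← cAct_mul, hcomm, cAct_mul, T7W, map_mul, cAct_L]
  have hst3 : ∀ x : L, x ≠ 0 → τ3 x ≠ 0 := fun x hx => (map_ne_zero _).2 hx
  have hst7 : ∀ x : L, x ≠ 0 → τ7 x ≠ 0 := fun x hx => (map_ne_zero _).2 hx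
  have main3 := congrArg (cAct K L τ3) main
  rw [map_mul, map_mul, map_mul, map_pow, map_pow, T34, T33, cAct_L, main] at main3
  have main7 := congrArg (cAct K L τ7) main
  rw [map_mul, map_mul, map_mul, map_pow, map_pow, T74, T7W, T73W, cAct_L, main] at main7
  obtain ⟨c, hc0, hc⟩ := const_of_sq (cAct K L τ3 Q / Q) (a / τ3 a) (div_ne_zero ha0 (hst3 a ha0)) (by
    have n1 := A0 _ (hst3 a ha0)
    rw [map_div₀, div_pow, div_eq_div_iff (pow_ne_zero _ hQ0) n1]
    apply mul_left_cancel₀ (mul_ne_zero hW0 hT3W0)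
    linear_combination -main3)
  obtain ⟨c', hc0', hc'⟩ := const_of_sq (cAct K L τ7 Q / Q) (a / (τ7 a * v * τ3 v))
    (div_ne_zero ha0 (mul_ne_zero (mul_ne_zero (hst7 a ha0) hv0) (hst3 v hv0))) (by
    have n1 := A0 _ (mul_ne_zero (mul_ne_zero (hst7 a ha0) hv0) (hst3 v hv0))
    rw [map_div₀, div_pow, div_eq_div_iff (pow_ne_zero _ hQ0) n1, map_mul, map_mul]
    apply mul_left_cancel₀ (mul_ne_zero hW0 hT3W0)
    linear_combination -main7)
  rw [div_eq_iff hQ0] at hc hc'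
  have hz4 : algebraMap L (RFF L (Fin 8)) ζ ^ 4 = -1 := by
    rw [← map_pow, zeta4 hζ, map_neg, map_one]
  have s4 : sg L (yv ζ 4) = - yv ζ 4 := by rw [sg_yv hζ, hz4]; ring
  have s1 : sg L (yv ζ 1 ^ 4) = - yv ζ 1 ^ 4 := by
    rw [map_pow, sg_yv hζ, pow_one, mul_pow, hz4]; ring
  have sQ : sg L Q = Q := by
    rw [hQ, map_div₀, map_mul, map_mul, s1, s4, map_pow, hsφ, hsφ]
    field_simp
  refine no_frac hζ τ3 τ7 h3 h7 (W * Q / yv ζ 4) (div_ne_zero (mul_ne_zero hW0 hQ0) y4) ?_ (c / a) (v * c')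
    (div_ne_zero hc0 ha0) (mul_ne_zero hv0 hc0') ?_ ?_
  · rw [map_div₀, map_mul, s4, sQ, hW, hsφ, div_neg]
  · rw [map_div₀, map_mul, T34, hc, map_div₀]
    have n1 := A0 _ ha0
    field_simp
    linear_combination -(algebraMap L (RFF L (Fin 8)) c) * main
  · rw [map_div₀, map_mul, T74, T7W, hc', map_mul]
    ring

end NonRat2

section Final

variable {K : Type} [Field K]

lemma exists_prim (h : ringChar K ≠ 2) : ∃ ζ : AlgebraicClosure K, IsPrimitiveRoot ζ 8 := by
  have h2 : (2 : K) ≠ 0 := Ring.two_ne_zero h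
  have h8 : ((8 : ℕ) : AlgebraicClosure K) ≠ 0 := by
    have h3 : (8 : K) ≠ 0 := by
      have : (8 : K) = 2 ^ 3 := by norm_num
      rw [this]; exact pow_ne_zero _ h2
    have h4 := (map_ne_zero (algebraMap K (AlgebraicClosure K))).2 h3
    rw [map_ofNat] at h4
    exact_mod_cast h4
  have : NeZero ((8 : ℕ) : AlgebraicClosure K) := ⟨h8⟩
  exact HasEnoughRootsOfUnity.exists_primitiveRoot (AlgebraicClosure K) 8

lemma field_setup (ζ : AlgebraicClosure K) (hζ : IsPrimitiveRoot ζ 8) :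
    ∃ ζ' : ↥(IntermediateField.adjoin K ({ζ} : Set (AlgebraicClosure K))), IsPrimitiveRoot ζ' 8 ∧
      IntermediateField.adjoin K {ζ'} = ⊤ ∧
      FiniteDimensional K ↥(IntermediateField.adjoin K ({ζ} : Set (AlgebraicClosure K))) ∧
      IsGalois K ↥(IntermediateField.adjoin K ({ζ} : Set (AlgebraicClosure K))) := by
  have hc : IsCyclotomicExtension {8} K ↥(IntermediateField.adjoin K ({ζ} : Set (AlgebraicClosure K))) :=
    hζ.intermediateField_adjoin_isCyclotomicExtension K
  refine ⟨IntermediateField.AdjoinSimple.gen K ζ, ?_, ?_, ?_, ?_⟩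
  · apply IsPrimitiveRoot.of_map_of_injective
      (f := algebraMap ↥(IntermediateField.adjoin K ({ζ} : Set (AlgebraicClosure K))) (AlgebraicClosure K))
      _ (RingHom.injective _)
    simpa using hζ
  · rw [eq_top_iff]
    have h1 : (⊤ : IntermediateField K ↥(IntermediateField.adjoin K ({ζ} : Set (AlgebraicClosure K)))).map
        (IntermediateField.val _) ≤
        (IntermediateField.adjoin K {IntermediateField.AdjoinSimple.gen K ζ}).map
          (IntermediateField.val _) := by
      rw [IntermediateField.adjoin_map, Set.image_singleton, ← AlgHom.fieldRange_eq_map,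
        IntermediateField.fieldRange_val]
      exact le_of_eq rfl
    intro x _
    obtain ⟨y, hy, hyx⟩ := h1 ⟨x, trivial, rfl⟩
    exact Subtype.ext hyx ▸ hy
  · exact IsCyclotomicExtension.finiteDimensional {8} K _
  · exact IsCyclotomicExtension.isGalois {8} K _

end Final

/-- **Rationality criterion for the cyclic group `C₈`.** Let `K` be any field and let
`G = ⟨(1,2,3,4,5,6,7,8)⟩ ⊆ S₈` be the cyclic group of order 8 generated by an 8-cycle
(here `finRotate 8` on `{0,…,7}`). Then `K(x₁,…,x₈)^G` is `K`-rational if and only if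
`char K = 2`, or `char K ≠ 2` and the Galois group `Gal(K(ζ₈)/K)` is cyclic, where `ζ₈` is a
primitive 8th root of unity in an algebraic closure of `K`. -/
theorem rationality_C8_iff (K : Type) [Field K] :
    IsRatExt K ↥(fixedSub K (Fin 8) (Subgroup.zpowers (finRotate 8))) ↔
      (ringChar K = 2 ∨
        (ringChar K ≠ 2 ∧ ∀ ζ : AlgebraicClosure K, IsPrimitiveRoot ζ 8 →
          IsCyclic (↥(IntermediateField.adjoin K ({ζ} : Set (AlgebraicClosure K))) ≃ₐ[K]
            ↥(IntermediateField.adjoin K ({ζ} : Set (AlgebraicClosure K)))))) := by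

  constructor
  · intro h
    by_cases h2 : ringChar K = 2
    · exact Or.inl h2
    · refine Or.inr ⟨h2, fun ζ hζ => ?_⟩
      by_contra hn
      obtain ⟨ζ', hζ', hL, hfd, hgal⟩ := field_setup ζ hζ
      obtain ⟨⟨τ3, h3⟩, τ7, h7⟩ := noncyclic hζ' hL hn
      exact not_rat hζ' hL τ3 τ7 h3 h7 h
  · rintro (h | ⟨h2, h⟩)
    · have : CharP K 2 := by rw [← h]; infer_instance
      exact rational_char_two K
    · obtain ⟨ζ, hζ⟩ := exists_prim h2
      obtain ⟨ζ', hζ', hL, hfd, hgal⟩ := field_setup ζ hζ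
      exact rat_of_cyclic hζ' hL (h ζ hζ)
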